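/- arXiv:math/0602211 — 5 statements merged into one kernel-verified Lean document; each statement's English description precedes it below -/
import Mathlib

section
/- In the auxiliary-variable accept–reject scheme, the average acceptance probability equals (Σ_{j=1}^N β_j)/M with M = max_k M_k/τ_k, and for any given choice of the proposal densities ρ(j,·) and bounds M_j this average acceptance probability is less than or equal to (Σ_{j=1}^N β_j)/(Σ_{j=1}^N M_j), with equality if and only if τ_j is proportional to M_j (i.e. τ_j = M_j/Σ_k M_k for all j). -/
open MeasureTheory

/-!
Multiplying the acceptance probability by the proposal density `τ_j ρ_j` leaves `f_j / C`, where
`f_j` is the `j`-th target `a(j, ·) b` and `C = max_k M_k / τ_k`. Summing `M_j ≤ C τ_j` over `j`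
gives `∑ M_j ≤ C`, with equality exactly when every one of these inequalities is an equality.
-/

section AcceptanceProbability

variable {ι α : Type*}

/-- The probability of accepting the proposed pair `(j, x)`, for unnormalised targets `f j`, index
probabilities `τ`, proposal densities `ρ j` and envelope constant `C`. It is `0`, by the convention
for division by zero, where `ρ j` vanishes. -/
noncomputable def acceptanceProb (f ρ : ι → α → ℝ) (τ : ι → ℝ) (C : ℝ) (j : ι) (x : α) : ℝ :=
  f j x / (C * τ j * ρ j x)

/-- The average acceptance probability: the integral of `acceptanceProb` against the joint law of
the proposed pair, which has density `τ j * ρ j x`. -/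
noncomputable def averageAcceptance [Fintype ι] [MeasurableSpace α] (μ : Measure α)
    (f ρ : ι → α → ℝ) (τ : ι → ℝ) (C : ℝ) : ℝ :=
  ∑ j, ∫ x, acceptanceProb f ρ τ C j x * (τ j * ρ j x) ∂μ

theorem acceptanceProb_mul_proposal {f ρ : ι → α → ℝ} {τ : ι → ℝ} {j : ι} {x : α} (C : ℝ)
    (hτ : τ j ≠ 0) (hsupp : ρ j x = 0 → f j x = 0) :
    acceptanceProb f ρ τ C j x * (τ j * ρ j x) = f j x / C := by
  unfold acceptanceProb
  by_cases hρ : ρ j x = 0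
  · rw [hsupp hρ, zero_div, zero_mul, zero_div]
  · rw [mul_assoc, div_mul_eq_mul_div, mul_div_mul_right _ _ (mul_ne_zero hτ hρ)]

theorem averageAcceptance_eq_div [Fintype ι] [MeasurableSpace α] {μ : Measure α}
    {f ρ : ι → α → ℝ} {τ : ι → ℝ} (C : ℝ) (hτ : ∀ j, τ j ≠ 0)
    (hsupp : ∀ j, ∀ᵐ x ∂μ, ρ j x = 0 → f j x = 0) :
    averageAcceptance μ f ρ τ C = (∑ j, ∫ x, f j x ∂μ) / C := by
  rw [averageAcceptance, Finset.sum_div]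
  refine Finset.sum_congr rfl fun j _ => ?_
  rw [← integral_div]
  exact integral_congr_ae ((hsupp j).mono fun x hx => acceptanceProb_mul_proposal C (hτ j) hx)

end AcceptanceProbability

theorem integral_le_of_ae_le_const_mul_of_integral_eq_one {α : Type*} [MeasurableSpace α]
    {μ : Measure α} {g ρ : α → ℝ} {c : ℝ} (hg : Integrable g μ) (hρ : ∫ x, ρ x ∂μ = 1)
    (h : ∀ᵐ x ∂μ, g x ≤ c * ρ x) : ∫ x, g x ∂μ ≤ c := by
  calc ∫ x, g x ∂μ
      ≤ ∫ x, c * ρ x ∂μ := integral_mono_ae hg ((integrable_of_integral_eq_one hρ).const_mul c) h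
    _ = c := by rw [integral_const_mul, hρ, mul_one]

section EnvelopeConstant

variable {ι : Type*}

/-- The envelope constant `max_k M_k / τ_k` of the joint accept-reject scheme. It is encoded as a
supremum, which is attained when `ι` is finite and nonempty. -/
noncomputable def envelopeConstant (M τ : ι → ℝ) : ℝ :=
  ⨆ k, M k / τ k

variable {M τ : ι → ℝ}

theorem le_envelopeConstant_mul [Finite ι] {j : ι} (hτ : 0 < τ j) :
    M j ≤ envelopeConstant M τ * τ j :=
  (div_le_iff₀ hτ).1 (le_ciSup (f := fun k => M k / τ k) (Set.finite_range _).bddAbove j)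

theorem envelopeConstant_eq_of_forall_eq_mul [Nonempty ι] {c : ℝ} (hτ : ∀ j, τ j ≠ 0)
    (h : ∀ j, M j = c * τ j) : envelopeConstant M τ = c := by
  have hratio : ∀ k, M k / τ k = c := fun k => (div_eq_iff (hτ k)).2 (h k)
  simp only [envelopeConstant, hratio, ciSup_const]

variable [Fintype ι]

theorem sum_le_envelopeConstant_mul_sum (hτ : ∀ j, 0 < τ j) :
    ∑ j, M j ≤ envelopeConstant M τ * ∑ j, τ j := by
  rw [Finset.mul_sum]
  exact Finset.sum_le_sum fun j _ => le_envelopeConstant_mul (hτ j)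

theorem sum_eq_envelopeConstant_mul_sum_iff (hτ : ∀ j, 0 < τ j) :
    ∑ j, M j = envelopeConstant M τ * ∑ j, τ j ↔ ∀ j, M j = envelopeConstant M τ * τ j := by
  rw [Finset.mul_sum, Finset.sum_eq_sum_iff_of_le fun j _ => le_envelopeConstant_mul (hτ j)]
  simp only [Finset.mem_univ, true_imp_iff]

theorem envelopeConstant_eq_sum_iff (hτ : ∀ j, 0 < τ j) (hτ_sum : ∑ j, τ j = 1)
    (hM : ∑ j, M j ≠ 0) :
    envelopeConstant M τ = ∑ j, M j ↔ ∀ j, τ j = M j / ∑ k, M k := by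
  have hiff : (∀ j, τ j = M j / ∑ k, M k) ↔ ∀ j, M j = (∑ k, M k) * τ j :=
    forall_congr' fun j => by rw [eq_div_iff hM, eq_comm, mul_comm]
  rw [hiff]
  constructor
  · intro h
    rw [← h]
    exact (sum_eq_envelopeConstant_mul_sum_iff hτ).1 (by rw [hτ_sum, mul_one, h])
  · have : Nonempty ι := (Finset.nonempty_of_sum_ne_zero hM).to_type
    exact envelopeConstant_eq_of_forall_eq_mul fun j => (hτ j).ne'

end EnvelopeConstant

theorem auxiliary_accept_reject_average_acceptance_general
    {ι α : Type*} [Fintype ι] [MeasurableSpace α] {μ : Measure α}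
    {f ρ : ι → α → ℝ} {τ M : ι → ℝ}
    (hf_nonneg : ∀ j, ∀ᵐ x ∂μ, 0 ≤ f j x) (hf_int : ∀ j, Integrable (f j) μ)
    (hf_pos : 0 < ∑ j, ∫ x, f j x ∂μ) (hρ_one : ∀ j, ∫ x, ρ j x ∂μ = 1)
    (hτ_pos : ∀ j, 0 < τ j) (hτ_sum : ∑ j, τ j = 1)
    (hM : ∀ j, ∀ᵐ x ∂μ, f j x ≤ M j * ρ j x) :
    averageAcceptance μ f ρ τ (envelopeConstant M τ)
        = (∑ j, ∫ x, f j x ∂μ) / envelopeConstant M τ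
      ∧ averageAcceptance μ f ρ τ (envelopeConstant M τ)
          ≤ (∑ j, ∫ x, f j x ∂μ) / ∑ j, M j
      ∧ (averageAcceptance μ f ρ τ (envelopeConstant M τ)
            = (∑ j, ∫ x, f j x ∂μ) / ∑ j, M j
          ↔ ∀ j, τ j = M j / ∑ k, M k) := by
  have hsupp : ∀ j, ∀ᵐ x ∂μ, ρ j x = 0 → f j x = 0 := fun j => by
    filter_upwards [hf_nonneg j, hM j] with x hnonneg hle hρ
    exact le_antisymm (by rwa [hρ, mul_zero] at hle) hnonneg
  have hM_sum : 0 < ∑ j, M j :=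
    hf_pos.trans_le <| Finset.sum_le_sum fun j _ =>
      integral_le_of_ae_le_const_mul_of_integral_eq_one (hf_int j) (hρ_one j) (hM j)
  have hM_le : ∑ j, M j ≤ envelopeConstant M τ := by
    simpa only [hτ_sum, mul_one] using sum_le_envelopeConstant_mul_sum (M := M) hτ_pos
  rw [averageAcceptance_eq_div _ (fun j => (hτ_pos j).ne') hsupp]
  refine ⟨rfl, div_le_div_of_nonneg_left hf_pos.le hM_sum hM_le, ?_⟩
  rw [div_eq_mul_inv, div_eq_mul_inv, mul_right_inj' hf_pos.ne', inv_inj]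
  exact envelopeConstant_eq_sum_iff hτ_pos hτ_sum hM_sum.ne'

/-- Lemma 1: in the auxiliary-variable accept–reject scheme with index proposal
probabilities `τ_j`, proposal densities `ρ(j,·)` and bounds
`M_j ≥ sup_x a(j,x) b(x) / ρ(j,x)`, with `M = max_k M_k / τ_k`, the average
acceptance probability `Σ_j ∫ π(j,x) τ_j ρ(j,x) dμ(x)`, where
`π(j,x) = a(j,x) b(x) / (M τ_j ρ(j,x))`, equals `(Σ_j β_j)/M`; it is
at most `(Σ_j β_j)/(Σ_j M_j)`, with equality if and only if `τ_j ∝ M_j`,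
i.e. `τ_j = M_j / Σ_k M_k` for all `j`.  Here `β_j = ∫ a(j,x) b(x) dμ(x)`. -/
theorem auxiliary_accept_reject_average_acceptance
    {α : Type*} [MeasurableSpace α] (μ : Measure α)
    (n : ℕ) (hn : 0 < n)
    (b : α → ℝ) (hb_meas : Measurable b) (hb_nonneg : ∀ x, 0 ≤ b x)
    (a ρ : Fin n → α → ℝ)
    (ha_meas : ∀ j, Measurable (a j)) (hρ_meas : ∀ j, Measurable (ρ j))
    (ha_nonneg : ∀ j x, 0 ≤ a j x) (hρ_nonneg : ∀ j x, 0 ≤ ρ j x)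
    (ha_one : ∀ j, ∫ x, a j x ∂μ = 1) (hρ_one : ∀ j, ∫ x, ρ j x ∂μ = 1)
    (hab_int : ∀ j, Integrable (fun x => a j x * b x) μ)
    (hβ_pos : ∀ j, 0 < ∫ x, a j x * b x ∂μ)
    (τ : Fin n → ℝ) (hτ_pos : ∀ j, 0 < τ j) (hτ_sum : ∑ j, τ j = 1)
    (M : Fin n → ℝ)
    (hM : ∀ j x, a j x * b x ≤ M j * ρ j x) :
    (∑ j, ∫ x, (a j x * b x / ((⨆ k, M k / τ k) * τ j * ρ j x)) * (τ j * ρ j x) ∂μ)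
        = (∑ j, ∫ x, a j x * b x ∂μ) / (⨆ k, M k / τ k)
      ∧ (∑ j, ∫ x, (a j x * b x / ((⨆ k, M k / τ k) * τ j * ρ j x)) * (τ j * ρ j x) ∂μ)
          ≤ (∑ j, ∫ x, a j x * b x ∂μ) / (∑ j, M j)
      ∧ ((∑ j, ∫ x, (a j x * b x / ((⨆ k, M k / τ k) * τ j * ρ j x)) * (τ j * ρ j x) ∂μ)
            = (∑ j, ∫ x, a j x * b x ∂μ) / (∑ j, M j)
          ↔ ∀ j, τ j = M j / ∑ k, M k) := by
  have hβ_sum : 0 < ∑ j, ∫ x, a j x * b x ∂μ :=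
    Finset.sum_pos (fun j _ => hβ_pos j) ⟨⟨0, hn⟩, Finset.mem_univ _⟩
  exact auxiliary_accept_reject_average_acceptance_general
    (fun j => .of_forall fun x => mul_nonneg (ha_nonneg j x) (hb_nonneg x)) hab_int hβ_sum hρ_one
    hτ_pos hτ_sum fun j => .of_forall (hM j)
end

section
/- For the systematic resampling counts N_j (without random permutation), for any j < k the covariance Cov(N_j, N_k) depends only on r_l = Nπ_j mod 1, r_u = Nπ_k mod 1 and r_m = N Σ_{i=j+1}^{k-1} π_i mod 1; explicitly, writing M_j = N_j − ⌊Nπ_j⌋ and M_k = N_k − ⌊Nπ_k⌋, one has E[M_j M_k] = (r_l + r_m + r_u − 1)^+ if r_l + r_m ≤ 1 and r_m + r_u ≤ 1; = r_u if r_l + r_m > 1 and r_m + r_u ≤ 1; = r_l if r_l + r_m ≤ 1 and r_m + r_u > 1; = 1 − r_m if r_l + r_m > 1, r_m + r_u > 1 and r_l + r_m + r_u ≤ 2; and = r_l + r_u − 1 if r_l + r_m + r_u > 2. Moreover, for every fixed r_l and r_u the integral of E[M_j M_k] over r_m uniformly distributed on (0,1) equals r_l r_u, so that the average of Cov(N_j,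 N_k) = E[M_j M_k] − r_l r_u with respect to uniform r_m is zero. -/
open MeasureTheory

/-- The systematic resampling count
`N_j = |[N Σ_{i=1}^{j-1} π_i + u, N Σ_{i=1}^{j} π_i + u) ∩ {1, 2, …, N}|`. -/
noncomputable def sysCount (N : ℕ) (π : ℕ → ℝ) (u : ℝ) (j : ℕ) : ℕ :=
  ((Finset.Icc 1 N).filter fun n : ℕ =>
    (N : ℝ) * (∑ i ∈ Finset.Icc 1 (j - 1), π i) + u ≤ (n : ℝ)
      ∧ (n : ℝ) < (N : ℝ) * (∑ i ∈ Finset.Icc 1 j, π i) + u).card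

/-- The explicit piecewise expression for `E[M_j M_k]` in Lemma 2, as a function of
`r_l, r_m, r_u`. -/
noncomputable def covF (rl rm ru : ℝ) : ℝ :=
  if 2 < rl + rm + ru then rl + ru - 1
  else if 1 < rl + rm ∧ 1 < rm + ru then 1 - rm
  else if 1 < rl + rm then ru
  else if 1 < rm + ru then rl
  else max (rl + rm + ru - 1) 0

/-! Let `D` be the number of integers in the shifted interval `[a + u, b + u)` minus its length.
Over uniform `u` it has mean zero, and since `D + fract (b - a)` is `0` or `1`, its variance is the
Bernoulli variance `v (b - a)` with `v t = fract t * (1 - fract t)`. As `D` is additive in the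
interval, polarization turns these variances into the covariance of the counts of two intervals
separated by a gap:
`2 Cov = v r_m + v (r_l + r_m + r_u) - v (r_l + r_m) - v (r_m + r_u)`.
The piecewise formula is this expression written out. It averages to zero over `r_m` because all
four terms are translates of one function of period one. -/

theorem integral_comp_add_left_of_periodic {E : Type*} [NormedAddCommGroup E] [NormedSpace ℝ E]
    {f : ℝ → E} {T : ℝ} (hf : Function.Periodic f T) (c : ℝ) :
    ∫ u in (0 : ℝ)..T, f (c + u) = ∫ u in (0 : ℝ)..T, f u := by
  rw [intervalIntegral.integral_comp_add_left, add_zero, hf.intervalIntegral_add_eq c 0, zero_add]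

theorem integral_comp_eq_setIntegral_of_map_eq_restrict {Ω α E : Type*} [MeasurableSpace Ω]
    [MeasurableSpace α] [NormedAddCommGroup E] [NormedSpace ℝ E] {P : Measure Ω} {ν : Measure α}
    {s : Set α} {X : Ω → α} {f g : α → E} (hX : AEMeasurable X P)
    (hlaw : P.map X = ν.restrict s) (hs : MeasurableSet s)
    (hg : AEStronglyMeasurable g (ν.restrict s)) (hfg : Set.EqOn f g s) :
    ∫ ω, f (X ω) ∂P = ∫ x in s, g x ∂ν := by
  have hf : AEStronglyMeasurable f (P.map X) := by
    rw [hlaw]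
    exact hg.congr (ae_restrict_of_forall_mem hs fun x hx => (hfg hx).symm)
  rw [← integral_map hX hf, hlaw, setIntegral_congr_fun hs hfg]

/-- The distance from `x` up to the next integer. The number of integers in `[x, y)` exceeds
`y - x` by `ceilGap y - ceilGap x`. -/
noncomputable def ceilGap (x : ℝ) : ℝ := ⌈x⌉ - x

/-- The variance `r (1 - r)`, `r = fract t`, of the number of integers in a uniformly shifted
half-open interval of length `t`. -/
noncomputable def fractVar (t : ℝ) : ℝ := Int.fract t * (1 - Int.fract t)

theorem ceilGap_nonneg (x : ℝ) : 0 ≤ ceilGap x :=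
  sub_nonneg.mpr (Int.le_ceil x)

theorem ceilGap_lt_one (x : ℝ) : ceilGap x < 1 :=
  sub_lt_iff_lt_add'.mpr (Int.ceil_lt_add_one x)

theorem ceilGap_periodic : Function.Periodic ceilGap 1 := fun x => by
  simp [ceilGap]

@[fun_prop]
theorem measurable_ceilGap : Measurable ceilGap := by
  unfold ceilGap
  fun_prop

theorem intervalIntegrable_ceilGap_comp_add_left (c x y : ℝ) :
    IntervalIntegrable (fun u => ceilGap (c + u)) volume x y := by
  refine intervalIntegrable_const.mono_fun (f := fun _ => (1 : ℝ))
    (measurable_ceilGap.comp (measurable_const_add c)).aestronglyMeasurable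
    (Filter.Eventually.of_forall fun u => ?_)
  simpa [abs_of_nonneg (ceilGap_nonneg _)] using (ceilGap_lt_one (c + u)).le

theorem integral_ceilGap_sub_ceilGap (a b : ℝ) :
    ∫ u in (0 : ℝ)..1, (ceilGap (b + u) - ceilGap (a + u)) = 0 := by
  rw [intervalIntegral.integral_sub (intervalIntegrable_ceilGap_comp_add_left b 0 1)
      (intervalIntegrable_ceilGap_comp_add_left a 0 1),
    integral_comp_add_left_of_periodic ceilGap_periodic,
    integral_comp_add_left_of_periodic ceilGap_periodic, sub_self]

theorem ceilGap_sub_ceilGap_add_fract_eq_zero_or_one (x y : ℝ) :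
    ceilGap y - ceilGap x + Int.fract (y - x) = 0 ∨
      ceilGap y - ceilGap x + Int.fract (y - x) = 1 := by
  have hint : ceilGap y - ceilGap x + Int.fract (y - x) = (⌈y⌉ - ⌈x⌉ - ⌊y - x⌋ : ℤ) := by
    simp only [ceilGap, Int.fract]
    push_cast
    ring
  have hlower : (-1 : ℝ) < (⌈y⌉ - ⌈x⌉ - ⌊y - x⌋ : ℤ) := by
    linarith [ceilGap_nonneg y, ceilGap_lt_one x, Int.fract_nonneg (y - x)]
  have hupper : ((⌈y⌉ - ⌈x⌉ - ⌊y - x⌋ : ℤ) : ℝ) < 2 := by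
    linarith [ceilGap_nonneg x, ceilGap_lt_one y, Int.fract_lt_one (y - x)]
  rw [hint]
  norm_cast at hlower hupper ⊢
  omega

theorem ceilGap_sub_ceilGap_sq (a b u : ℝ) :
    (ceilGap (b + u) - ceilGap (a + u)) ^ 2 =
      (1 - 2 * Int.fract (b - a)) * (ceilGap (b + u) - ceilGap (a + u)) + fractVar (b - a) := by
  have hvalues := ceilGap_sub_ceilGap_add_fract_eq_zero_or_one (a + u) (b + u)
  rw [add_sub_add_right_eq_sub] at hvalues
  unfold fractVar
  rcases hvalues with h | h
  · linear_combination (ceilGap (b + u) - ceilGap (a + u) + Int.fract (b - a) - 1) * h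
  · linear_combination (ceilGap (b + u) - ceilGap (a + u) + Int.fract (b - a)) * h

theorem intervalIntegrable_ceilGap_sub_ceilGap (a b x y : ℝ) :
    IntervalIntegrable (fun u => ceilGap (b + u) - ceilGap (a + u)) volume x y :=
  (intervalIntegrable_ceilGap_comp_add_left b x y).sub
    (intervalIntegrable_ceilGap_comp_add_left a x y)

theorem intervalIntegrable_ceilGap_sub_ceilGap_sq (a b x y : ℝ) :
    IntervalIntegrable (fun u => (ceilGap (b + u) - ceilGap (a + u)) ^ 2) volume x y := by
  simpa only [ceilGap_sub_ceilGap_sq] using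
    ((intervalIntegrable_ceilGap_sub_ceilGap a b x y).const_mul _).add intervalIntegrable_const

theorem integral_ceilGap_sub_ceilGap_sq (a b : ℝ) :
    ∫ u in (0 : ℝ)..1, (ceilGap (b + u) - ceilGap (a + u)) ^ 2 = fractVar (b - a) := by
  simp only [ceilGap_sub_ceilGap_sq]
  rw [intervalIntegral.integral_add
      ((intervalIntegrable_ceilGap_sub_ceilGap a b 0 1).const_mul _) intervalIntegrable_const,
    intervalIntegral.integral_const_mul, integral_ceilGap_sub_ceilGap]
  simp

theorem sub_mul_sub_eq_polarization {K : Type*} [Field K] [CharZero K] (p q r s : K) :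
    (q - p) * (s - r) = ((r - q) ^ 2 + (s - p) ^ 2 - (r - p) ^ 2 - (s - q) ^ 2) / 2 := by
  ring

theorem intervalIntegrable_ceilGap_sub_mul_ceilGap_sub (a b c d x y : ℝ) :
    IntervalIntegrable
      (fun u => (ceilGap (b + u) - ceilGap (a + u)) * (ceilGap (d + u) - ceilGap (c + u)))
      volume x y := by
  have hsq := fun a b => intervalIntegrable_ceilGap_sub_ceilGap_sq a b x y
  simpa only [sub_mul_sub_eq_polarization] using
    ((((hsq b c).add (hsq a d)).sub (hsq a c)).sub (hsq b d)).div_const 2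

theorem integral_ceilGap_sub_mul_ceilGap_sub (a b c d : ℝ) :
    ∫ u in (0 : ℝ)..1,
        (ceilGap (b + u) - ceilGap (a + u)) * (ceilGap (d + u) - ceilGap (c + u)) =
      (fractVar (c - b) + fractVar (d - a) - fractVar (c - a) - fractVar (d - b)) / 2 := by
  have hsq := fun a b => intervalIntegrable_ceilGap_sub_ceilGap_sq a b 0 1
  simp only [sub_mul_sub_eq_polarization]
  rw [intervalIntegral.integral_div,
    intervalIntegral.integral_sub (((hsq b c).add (hsq a d)).sub (hsq a c)) (hsq b d),
    intervalIntegral.integral_sub ((hsq b c).add (hsq a d)) (hsq a c),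
    intervalIntegral.integral_add (hsq b c) (hsq a d)]
  simp only [integral_ceilGap_sub_ceilGap_sq]

theorem integral_ceilGap_sub_add_mul_ceilGap_sub_add (a b c d r s : ℝ) :
    ∫ u in (0 : ℝ)..1,
        (ceilGap (b + u) - ceilGap (a + u) + r) * (ceilGap (d + u) - ceilGap (c + u) + s) =
      r * s + (fractVar (c - b) + fractVar (d - a) - fractVar (c - a) - fractVar (d - b)) / 2 := by
  have hprod := intervalIntegrable_ceilGap_sub_mul_ceilGap_sub a b c d 0 1
  have hfst := (intervalIntegrable_ceilGap_sub_ceilGap a b 0 1).mul_const s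
  have hsnd := (intervalIntegrable_ceilGap_sub_ceilGap c d 0 1).const_mul r
  simp only [add_mul _ r, mul_add _ _ s, ← add_assoc]
  rw [intervalIntegral.integral_add ((hprod.add hfst).add hsnd) intervalIntegrable_const,
    intervalIntegral.integral_add (hprod.add hfst) hsnd, intervalIntegral.integral_add hprod hfst,
    intervalIntegral.integral_mul_const, intervalIntegral.integral_const_mul,
    integral_ceilGap_sub_mul_ceilGap_sub, integral_ceilGap_sub_ceilGap,
    integral_ceilGap_sub_ceilGap, intervalIntegral.integral_const]
  simp only [sub_zero, one_smul]
  ring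

theorem fractVar_eq_of_mem_Icc {t : ℝ} (n : ℤ) (ht : t ∈ Set.Icc (n : ℝ) (n + 1)) :
    fractVar t = (t - n) * (n + 1 - t) := by
  unfold fractVar
  rcases ht.2.eq_or_lt with rfl | hlt
  · simp
  · rw [Int.fract, Int.floor_eq_iff.mpr ⟨ht.1, hlt⟩]
    ring

theorem fractVar_periodic : Function.Periodic fractVar 1 := fun t => by
  simp [fractVar]

theorem fractVar_add_fract (s t : ℝ) : fractVar (s + Int.fract t) = fractVar (s + t) := by
  rw [← Int.self_sub_floor, ← add_sub_assoc]
  simp [fractVar]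

theorem fractVar_fract_add (s t : ℝ) : fractVar (Int.fract s + t) = fractVar (s + t) := by
  rw [add_comm, fractVar_add_fract, add_comm]

theorem continuous_fractVar : Continuous fractVar :=
  ContinuousOn.comp_fract'' (f := fun r : ℝ => r * (1 - r)) (by fun_prop) (by simp)

theorem covF_eq_mul_add_fractVar {rl rm ru : ℝ} (hl : rl ∈ Set.Icc (0 : ℝ) 1)
    (hm : rm ∈ Set.Icc (0 : ℝ) 1) (hu : ru ∈ Set.Icc (0 : ℝ) 1) :
    covF rl rm ru = rl * ru +
      (fractVar rm + fractVar (rl + rm + ru) - fractVar (rl + rm) - fractVar (rm + ru)) / 2 := by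
  obtain ⟨hl₀, hl₁⟩ := hl
  obtain ⟨hm₀, hm₁⟩ := hm
  obtain ⟨hu₀, hu₁⟩ := hu
  have hv₀ {t : ℝ} (h₀ : 0 ≤ t) (h₁ : t ≤ 1) : fractVar t = t * (1 - t) := by
    simpa using fractVar_eq_of_mem_Icc (t := t) 0 (by simp [h₀, h₁])
  have hv₁ {t : ℝ} (h₁ : 1 ≤ t) (h₂ : t ≤ 2) : fractVar t = (t - 1) * (2 - t) := by
    rw [fractVar_eq_of_mem_Icc 1 ⟨by simpa, by norm_num [h₂]⟩]
    norm_num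
  have hv₂ {t : ℝ} (h₂ : 2 ≤ t) (h₃ : t ≤ 3) : fractVar t = (t - 2) * (3 - t) := by
    rw [fractVar_eq_of_mem_Icc 2 ⟨by simpa, by norm_num [h₃]⟩]
    norm_num
  rw [hv₀ hm₀ hm₁]
  unfold covF
  split_ifs with hs hlmu hlm hmu
  · rw [hv₂ hs.le (by linarith), hv₁ (t := rl + rm) (by linarith) (by linarith),
      hv₁ (t := rm + ru) (by linarith) (by linarith)]
    ring
  · rw [hv₁ (t := rl + rm + ru) (by linarith) (by linarith), hv₁ hlmu.1.le (by linarith),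
      hv₁ hlmu.2.le (by linarith)]
    ring
  · rw [hv₁ (t := rl + rm + ru) (by linarith) (by linarith), hv₁ hlm.le (by linarith),
      hv₀ (t := rm + ru) (by linarith) (not_lt.mp fun hmu => hlmu ⟨hlm, hmu⟩)]
    ring
  · rw [hv₁ (t := rl + rm + ru) (by linarith) (by linarith),
      hv₀ (t := rl + rm) (by linarith) (by linarith), hv₁ hmu.le (by linarith)]
    ring
  · rw [hv₀ (t := rl + rm) (by linarith) (by linarith),
      hv₀ (t := rm + ru) (by linarith) (by linarith)]
    rcases le_total (rl + rm + ru) 1 with h | h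
    · rw [max_eq_right (by linarith), hv₀ (by linarith) h]
      ring
    · rw [max_eq_left (by linarith), hv₁ h (by linarith)]
      ring

theorem covF_fract (x m y : ℝ) :
    covF (Int.fract x) (Int.fract m) (Int.fract y) = Int.fract x * Int.fract y +
      (fractVar m + fractVar (x + m + y) - fractVar (x + m) - fractVar (m + y)) / 2 := by
  have hmem (t : ℝ) : Int.fract t ∈ Set.Icc (0 : ℝ) 1 :=
    ⟨Int.fract_nonneg t, (Int.fract_lt_one t).le⟩
  have hm : fractVar (Int.fract m) = fractVar m := by
    simpa only [zero_add] using fractVar_add_fract 0 m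
  have hsum : fractVar (Int.fract x + Int.fract m + Int.fract y) = fractVar (x + m + y) := by
    rw [fractVar_add_fract, add_assoc, fractVar_fract_add, add_left_comm, fractVar_fract_add,
      add_left_comm, add_assoc]
  simp only [covF_eq_mul_add_fractVar (hmem x) (hmem m) (hmem y),
    hm, hsum, fractVar_fract_add, fractVar_add_fract]

theorem integral_ceilGap_residual_mul_residual (a b c d : ℝ) :
    ∫ u in (0 : ℝ)..1, (ceilGap (b + u) - ceilGap (a + u) + Int.fract (b - a)) *
        (ceilGap (d + u) - ceilGap (c + u) + Int.fract (d - c)) =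
      covF (Int.fract (b - a)) (Int.fract (c - b)) (Int.fract (d - c)) := by
  rw [integral_ceilGap_sub_add_mul_ceilGap_sub_add, covF_fract, add_comm (b - a) (c - b),
    sub_add_sub_cancel, add_comm (c - a), sub_add_sub_cancel, add_comm (c - b),
    sub_add_sub_cancel]

theorem integral_covF_sub_mul {rl ru : ℝ} (hl : rl ∈ Set.Icc (0 : ℝ) 1)
    (hu : ru ∈ Set.Icc (0 : ℝ) 1) :
    ∫ rm in (0 : ℝ)..1, (covF rl rm ru - rl * ru) = 0 := by
  have hshift : Set.EqOn (fun rm => covF rl rm ru - rl * ru)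
      (fun rm => (fractVar rm + fractVar (rl + ru + rm) - fractVar (rl + rm) -
        fractVar (ru + rm)) / 2) (Set.uIcc 0 1) := fun rm hm => by
    rw [Set.uIcc_of_le zero_le_one] at hm
    simp only [covF_eq_mul_add_fractVar hl hm hu, add_right_comm rl ru rm, add_comm ru rm]
    ring
  have hint (c : ℝ) : IntervalIntegrable (fun rm => fractVar (c + rm)) volume 0 1 :=
    (continuous_fractVar.comp (continuous_const_add c)).intervalIntegrable 0 1
  have hint₀ : IntervalIntegrable fractVar volume 0 1 := continuous_fractVar.intervalIntegrable 0 1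
  rw [intervalIntegral.integral_congr hshift, intervalIntegral.integral_div,
    intervalIntegral.integral_sub ((hint₀.add (hint _)).sub (hint _)) (hint _),
    intervalIntegral.integral_sub (hint₀.add (hint _)) (hint _),
    intervalIntegral.integral_add hint₀ (hint _)]
  simp only [integral_comp_add_left_of_periodic fractVar_periodic]
  ring

/-- The cumulative expected count `N (π_1 + ⋯ + π_n)`: the unshifted right endpoint of the
interval whose integers are counted by `N_n`. -/
noncomputable def cumMean (N : ℕ) (π : ℕ → ℝ) (n : ℕ) : ℝ :=
  N * ∑ i ∈ Finset.Icc 1 n, π i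

theorem cumMean_sub_cumMean (N : ℕ) (π : ℕ → ℝ) {p q : ℕ} (hpq : p ≤ q) :
    cumMean N π q - cumMean N π p = N * ∑ i ∈ Finset.Icc (p + 1) q, π i := by
  simp only [cumMean, ← Finset.Ico_add_one_right_eq_Icc]
  rw [← Finset.sum_Ico_consecutive π (by omega : 1 ≤ p + 1) (by omega : p + 1 ≤ q + 1)]
  ring

theorem cumMean_sub_pred (N : ℕ) (π : ℕ → ℝ) {n : ℕ} (hn : 1 ≤ n) :
    cumMean N π n - cumMean N π (n - 1) = N * π n := by
  rw [cumMean_sub_cumMean N π (Nat.sub_le n 1), Nat.sub_add_cancel hn, Finset.Icc_self,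
    Finset.sum_singleton]

theorem cumMean_mono (N : ℕ) {π : ℕ → ℝ} (hπ : ∀ i, 0 ≤ π i) : Monotone (cumMean N π) :=
  fun p q hpq => sub_nonneg.mp <| by
    rw [cumMean_sub_cumMean N π hpq]
    exact mul_nonneg N.cast_nonneg (Finset.sum_nonneg fun i _ => hπ i)

theorem card_filter_Icc_one_eq_ceil_sub_ceil {N : ℕ} {x y : ℝ} (hx : 0 < x) (hxy : x ≤ y)
    (hy : y ≤ N + 1) :
    (((Finset.Icc 1 N).filter fun n : ℕ => x ≤ n ∧ (n : ℝ) < y).card : ℝ) = ⌈y⌉ - ⌈x⌉ := by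
  have hfilter : ((Finset.Icc 1 N).filter fun n : ℕ => x ≤ n ∧ (n : ℝ) < y) =
      Finset.Ico ⌈x⌉₊ ⌈y⌉₊ := by
    ext n
    simp only [Finset.mem_filter, Finset.mem_Icc, Finset.mem_Ico, Nat.ceil_le, Nat.lt_ceil,
      and_iff_right_iff_imp]
    rintro ⟨hxn, hny⟩
    have hpos : (0 : ℝ) < n := hx.trans_le hxn
    have hlt : (n : ℝ) < N + 1 := hny.trans_le hy
    norm_cast at hpos hlt
    omega
  rw [hfilter, Nat.card_Ico, Nat.cast_sub (Nat.ceil_mono hxy), natCast_ceil_eq_intCast_ceil hx.le,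
    natCast_ceil_eq_intCast_ceil (hx.le.trans hxy)]

theorem sysCount_sub_floor {N : ℕ} {π : ℕ → ℝ} (hπ : ∀ i, 0 ≤ π i) {n : ℕ} (hn : 1 ≤ n)
    (hN : cumMean N π n ≤ N) {u : ℝ} (hu : u ∈ Set.Ioc (0 : ℝ) 1) :
    (sysCount N π u n : ℝ) - ⌊(N : ℝ) * π n⌋ =
      ceilGap (cumMean N π n + u) - ceilGap (cumMean N π (n - 1) + u) +
        Int.fract (cumMean N π n - cumMean N π (n - 1)) := by
  have hnonneg : 0 ≤ cumMean N π (n - 1) :=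
    mul_nonneg N.cast_nonneg (Finset.sum_nonneg fun i _ => hπ i)
  have hmono : cumMean N π (n - 1) ≤ cumMean N π n := cumMean_mono N hπ (Nat.sub_le n 1)
  obtain ⟨hu₀, hu₁⟩ := hu
  have hcount : (sysCount N π u n : ℝ) =
      ⌈cumMean N π n + u⌉ - ⌈cumMean N π (n - 1) + u⌉ :=
    card_filter_Icc_one_eq_ceil_sub_ceil (x := cumMean N π (n - 1) + u) (y := cumMean N π n + u)
      (by linarith) (by linarith) (by linarith)
  rw [hcount, ceilGap, ceilGap, Int.fract, ← cumMean_sub_pred N π hn]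
  ring

theorem cumMean_le_of_sum_eq_one (N : ℕ) {π : ℕ → ℝ} (hπ : ∀ i, 0 ≤ π i) {R n : ℕ}
    (hsum : ∑ i ∈ Finset.Icc 1 R, π i = 1) (hn : n ≤ R) : cumMean N π n ≤ N :=
  (cumMean_mono N hπ hn).trans_eq <| by rw [cumMean, hsum, mul_one]

/-- Lemma 2: for systematic resampling (without random permutation) with a uniform
`U` on `(0,1)`, for `j < k` the covariance `Cov(N_j, N_k) = E[M_j M_k] − r_l r_u`
(with `M_j = N_j − ⌊Nπ_j⌋`, `M_k = N_k − ⌊Nπ_k⌋`) depends only on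
`r_l = Nπ_j mod 1`, `r_u = Nπ_k mod 1` and `r_m = N Σ_{i=j+1}^{k-1} π_i mod 1`, with
`E[M_j M_k]` given by the explicit piecewise expression `covF r_l r_m r_u`; moreover,
for every `r_l, r_u ∈ [0,1)` the average of `E[M_j M_k]` over `r_m` uniform on `(0,1)`
equals `r_l r_u`, i.e. the average of the covariance is zero. -/
theorem systematic_resampling_covariance
    {Ω : Type*} [MeasurableSpace Ω] (P : Measure Ω) [IsProbabilityMeasure P]
    (U : Ω → ℝ) (hU_meas : Measurable U)
    (hU_law : Measure.map U P = volume.restrict (Set.Ioo (0 : ℝ) 1))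
    (R N : ℕ) (π : ℕ → ℝ)
    (hπ_nonneg : ∀ i, 0 ≤ π i)
    (hπ_sum : ∑ i ∈ Finset.Icc 1 R, π i = 1)
    (j k : ℕ) (hj : 1 ≤ j) (hjk : j < k) (hkR : k ≤ R) :
    (∫ ω, ((sysCount N π (U ω) j : ℝ) - ⌊(N : ℝ) * π j⌋)
        * ((sysCount N π (U ω) k : ℝ) - ⌊(N : ℝ) * π k⌋) ∂P)
      = covF (Int.fract ((N : ℝ) * π j))
          (Int.fract ((N : ℝ) * ∑ i ∈ Finset.Icc (j + 1) (k - 1), π i))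
          (Int.fract ((N : ℝ) * π k))
    ∧ ∀ rl ru : ℝ, rl ∈ Set.Ico (0 : ℝ) 1 → ru ∈ Set.Ico (0 : ℝ) 1 →
        (∫ rm in Set.Ioo (0 : ℝ) 1, (covF rl rm ru - rl * ru)) = 0 := by
  refine ⟨?_, fun rl ru hl hu => ?_⟩
  · have hresidual (n : ℕ) (hn : 1 ≤ n) (hnR : n ≤ R) (u : ℝ) (hu : u ∈ Set.Ioo (0 : ℝ) 1) :=
      sysCount_sub_floor hπ_nonneg hn (cumMean_le_of_sum_eq_one N hπ_nonneg hπ_sum hnR)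
        (Set.Ioo_subset_Ioc_self hu)
    rw [integral_comp_eq_setIntegral_of_map_eq_restrict hU_meas.aemeasurable hU_law
        measurableSet_Ioo ?_ fun u hu => congrArg₂ (· * ·)
          (hresidual j hj (by omega) u hu) (hresidual k (by omega) hkR u hu),
      ← integral_Ioc_eq_integral_Ioo, ← intervalIntegral.integral_of_le zero_le_one,
      integral_ceilGap_residual_mul_residual, cumMean_sub_pred N π hj,
      cumMean_sub_pred N π (by omega : 1 ≤ k), cumMean_sub_cumMean N π (by omega : j ≤ k - 1)]
    fun_prop
  · rw [← integral_Ioc_eq_integral_Ioo, ← intervalIntegral.integral_of_le zero_le_one]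
    exact integral_covF_sub_mul (Set.Ico_subset_Icc_self hl) (Set.Ico_subset_Icc_self hu)
end

section
/- For any two probability densities f, g with respect to μ and any bounded nonnegative likelihood b with ∫ b f dμ > 0 and ∫ b g dμ > 0, ‖B(f,b) − B(g,b)‖₁ ≤ β(f,b) ‖f − g‖₁, where β(f,b) = (sup_x b(x)) / (∫ b(x) f(x) dμ(x)). -/
open MeasureTheory

/-- The Bayes operator `B(f, b)(x) = f(x) b(x) / ∫ f b dμ`. -/
noncomputable def bayesOp {α : Type*} [MeasurableSpace α] (μ : Measure α)
    (f b : α → ℝ) : α → ℝ :=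
  fun x => f x * b x / ∫ x', f x' * b x' ∂μ

/-!
Write `F = ∫ f b dμ` and `G = ∫ g b dμ`. Then
`B(f, b) - B(g, b) = (b / F) (f - g) + (1 / F - 1 / G) g b`,
and the last term has constant sign, that of `G - F`. If `G ≤ F`, the positive part of
`B(f, b) - B(g, b)` is therefore at most `sup b / F` times the positive part of `f - g`. A function
of integral zero has `L¹` norm twice the integral of its positive part, and both differences have
integral zero. If `F ≤ G`, apply the same argument to the negative parts.
-/

theorem posPart_le_mul_posPart_of_le_mul {R : Type*} [Ring R] [Lattice R] [IsOrderedRing R]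
    {a b t c : R} (ht : 0 ≤ t) (htc : t ≤ c) (h : a ≤ t * b) : a⁺ ≤ c * b⁺ := by
  refine sup_le ?_ (mul_nonneg (ht.trans htc) (posPart_nonneg b))
  calc
    a ≤ t * b := h
    _ ≤ t * b⁺ := mul_le_mul_of_nonneg_left (le_posPart b) ht
    _ ≤ c * b⁺ := mul_le_mul_of_nonneg_right htc (posPart_nonneg b)

section IntegralAbs

variable {α : Type*} [MeasurableSpace α] {μ : Measure α} {u v w : α → ℝ} {c : ℝ}

theorem integral_abs_le_mul_of_posPart_le (hu : Integrable u μ) (hv : Integrable v μ)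
    (hint : c * ∫ x, v x ∂μ ≤ ∫ x, u x ∂μ) (h : ∀ᵐ x ∂μ, (u x)⁺ ≤ c * (v x)⁺) :
    ∫ x, |u x| ∂μ ≤ c * ∫ x, |v x| ∂μ := by
  have hpos : ∫ x, (u x)⁺ ∂μ ≤ c * ∫ x, (v x)⁺ ∂μ := by
    rw [← integral_const_mul]
    exact integral_mono_ae hu.pos_part (hv.pos_part.const_mul c) h
  rw [integral_abs_eq_two_mul_integral_posPart_sub_integral hu,
    integral_abs_eq_two_mul_integral_posPart_sub_integral hv]
  linarith

theorem integral_abs_le_mul_of_le_mul (hu : Integrable u μ) (hv : Integrable v μ)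
    (hint : c * ∫ x, v x ∂μ ≤ ∫ x, u x ∂μ) (hw : ∀ᵐ x ∂μ, 0 ≤ w x) (hwc : ∀ᵐ x ∂μ, w x ≤ c)
    (h : ∀ᵐ x ∂μ, u x ≤ w x * v x) :
    ∫ x, |u x| ∂μ ≤ c * ∫ x, |v x| ∂μ := by
  refine integral_abs_le_mul_of_posPart_le hu hv hint ?_
  filter_upwards [hw, hwc, h] with x hwx hwcx hx
  exact posPart_le_mul_posPart_of_le_mul hwx hwcx hx

theorem integral_abs_le_mul_of_mul_le (hu : Integrable u μ) (hv : Integrable v μ)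
    (hint : ∫ x, u x ∂μ ≤ c * ∫ x, v x ∂μ) (hw : ∀ᵐ x ∂μ, 0 ≤ w x) (hwc : ∀ᵐ x ∂μ, w x ≤ c)
    (h : ∀ᵐ x ∂μ, w x * v x ≤ u x) :
    ∫ x, |u x| ∂μ ≤ c * ∫ x, |v x| ∂μ := by
  have hneg := integral_abs_le_mul_of_le_mul (c := c) (w := w) hu.neg hv.neg
    (by simpa [integral_neg] using hint) hw hwc (by simpa using h)
  simpa using hneg

end IntegralAbs

section BayesOp

variable {α : Type*} [MeasurableSpace α] {μ : Measure α} {f g b : α → ℝ}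

theorem integrable_bayesOp (hfb : Integrable (fun x => f x * b x) μ) :
    Integrable (bayesOp μ f b) μ :=
  hfb.div_const _

theorem integral_bayesOp (hF : ∫ x, f x * b x ∂μ ≠ 0) : ∫ x, bayesOp μ f b x ∂μ = 1 := by
  simp only [bayesOp, integral_div, div_self hF]

theorem bayesOp_sub_bayesOp (x : α) :
    bayesOp μ f b x - bayesOp μ g b x =
      b x / (∫ y, f y * b y ∂μ) * (f x - g x) +
        (1 / (∫ y, f y * b y ∂μ) - 1 / ∫ y, g y * b y ∂μ) * (g x * b x) := by
  simp only [bayesOp]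
  ring

theorem bayesOp_sub_bayesOp_le (hG : 0 < ∫ y, g y * b y ∂μ)
    (hGF : ∫ y, g y * b y ∂μ ≤ ∫ y, f y * b y ∂μ) {x : α} (hx : 0 ≤ g x * b x) :
    bayesOp μ f b x - bayesOp μ g b x ≤ b x / (∫ y, f y * b y ∂μ) * (f x - g x) := by
  rw [bayesOp_sub_bayesOp]
  exact add_le_of_nonpos_right <|
    mul_nonpos_of_nonpos_of_nonneg (sub_nonpos.2 (one_div_le_one_div_of_le hG hGF)) hx

theorem le_bayesOp_sub_bayesOp (hF : 0 < ∫ y, f y * b y ∂μ)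
    (hFG : ∫ y, f y * b y ∂μ ≤ ∫ y, g y * b y ∂μ) {x : α} (hx : 0 ≤ g x * b x) :
    b x / (∫ y, f y * b y ∂μ) * (f x - g x) ≤ bayesOp μ f b x - bayesOp μ g b x := by
  rw [bayesOp_sub_bayesOp]
  exact le_add_of_nonneg_right <|
    mul_nonneg (sub_nonneg.2 (one_div_le_one_div_of_le hF hFG)) hx

theorem bayes_operator_L1_lipschitz_general {C : ℝ}
    (hf : Integrable f μ) (hg : Integrable g μ) (hb : AEStronglyMeasurable b μ)
    (hfg : ∫ x, f x ∂μ = ∫ x, g x ∂μ) (hg_nonneg : ∀ᵐ x ∂μ, 0 ≤ g x)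
    (hb_nonneg : ∀ᵐ x ∂μ, 0 ≤ b x) (hb_le : ∀ᵐ x ∂μ, b x ≤ C)
    (hF : 0 < ∫ x, f x * b x ∂μ) (hG : 0 < ∫ x, g x * b x ∂μ) :
    ∫ x, |bayesOp μ f b x - bayesOp μ g b x| ∂μ
      ≤ (C / ∫ x, f x * b x ∂μ) * ∫ x, |f x - g x| ∂μ := by
  have hb_norm : ∀ᵐ x ∂μ, ‖b x‖ ≤ C := by
    filter_upwards [hb_nonneg, hb_le] with x h0 hC
    rwa [Real.norm_of_nonneg h0]
  have hBf := integrable_bayesOp (hf.mul_bdd hb hb_norm)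
  have hBg := integrable_bayesOp (hg.mul_bdd hb hb_norm)
  have hB_zero : ∫ x, (bayesOp μ f b x - bayesOp μ g b x) ∂μ = 0 := by
    rw [integral_sub hBf hBg, integral_bayesOp hF.ne', integral_bayesOp hG.ne', sub_self]
  have hfg_zero : ∫ x, (f x - g x) ∂μ = 0 := by rw [integral_sub hf hg, hfg, sub_self]
  have hw : ∀ᵐ x ∂μ, 0 ≤ b x / ∫ y, f y * b y ∂μ :=
    hb_nonneg.mono fun _ h => div_nonneg h hF.le
  have hwC : ∀ᵐ x ∂μ, b x / (∫ y, f y * b y ∂μ) ≤ C / ∫ y, f y * b y ∂μ :=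
    hb_le.mono fun _ h => div_le_div_of_nonneg_right h hF.le
  have hgb : ∀ᵐ x ∂μ, 0 ≤ g x * b x := by
    filter_upwards [hg_nonneg, hb_nonneg] with x using mul_nonneg
  rcases le_total (∫ x, g x * b x ∂μ) (∫ x, f x * b x ∂μ) with hGF | hFG
  · exact integral_abs_le_mul_of_le_mul (hBf.sub hBg) (hf.sub hg) (by simp [hB_zero, hfg_zero])
      hw hwC (hgb.mono fun _ => bayesOp_sub_bayesOp_le hG hGF)
  · exact integral_abs_le_mul_of_mul_le (hBf.sub hBg) (hf.sub hg) (by simp [hB_zero, hfg_zero])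
      hw hwC (hgb.mono fun _ => le_bayesOp_sub_bayesOp hF hFG)

end BayesOp

/-- Lemma 7: Lipschitz continuity of the Bayes operator in the prior, with constant
`β(f,b) = sup_x b(x) / ∫ b f dμ`. -/
theorem bayes_operator_L1_lipschitz
    {α : Type*} [MeasurableSpace α] (μ : Measure α)
    (f g b : α → ℝ)
    (hf_meas : Measurable f) (hg_meas : Measurable g) (hb_meas : Measurable b)
    (hf_nonneg : ∀ x, 0 ≤ f x) (hg_nonneg : ∀ x, 0 ≤ g x) (hb_nonneg : ∀ x, 0 ≤ b x)
    (hf_int : Integrable f μ) (hg_int : Integrable g μ)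
    (hf_one : ∫ x, f x ∂μ = 1) (hg_one : ∫ x, g x ∂μ = 1)
    (hb_bdd : BddAbove (Set.range b))
    (hbf_pos : 0 < ∫ x, f x * b x ∂μ)
    (hbg_pos : 0 < ∫ x, g x * b x ∂μ) :
    ∫ x, |bayesOp μ f b x - bayesOp μ g b x| ∂μ
      ≤ ((⨆ x, b x) / ∫ x, f x * b x ∂μ) * ∫ x, |f x - g x| ∂μ := by
  exact bayes_operator_L1_lipschitz_general hf_int hg_int hb_meas.aestronglyMeasurable
    (hf_one.trans hg_one.symm) (.of_forall hg_nonneg) (.of_forall hb_nonneg)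
    (.of_forall (le_ciSup hb_bdd)) hbf_pos hbg_pos
end

section
/- If x ↦ a(x,·) is continuous with respect to the L₁-norm, then for every ε > 0, under i.i.d. sampling of size N from a probability density g, P[‖A* E_N(g) − A* g‖₁ > ε] → 0 exponentially fast in N (there exist constants, depending on ε and a but not on N, such that the probability is at most c₁ exp(−c₂ N)). Moreover, for any fixed compact set K, the convergence is uniform over all densities g with ∫_K g dμ ≥ 1 − ε/6. -/
open MeasureTheory

/-!
In the Banach space `L¹(μ)`, `A* E_N(g)` is the empirical mean of `F x = a(x, ·)` and `A* g` is its
expectation. Hoeffding's inequality for indicators gives an exponential bound, uniform in the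
sampling law, for every simple function `s` with values in `L¹(μ)`. If `E‖F - s‖ ≤ ε / 3`, the bound
passes from `s` to `F`, because the empirical mean of the bounded real variable `‖F - s‖` is, again
by Hoeffding's inequality, close to its expectation. For laws with mass at least `1 - ε / 6` on a
compact set `K`, one simple function serves them all: send `x` to the point nearest to `F x` in a
finite `ε / 6`-net of `F(K)` together with `0`. The error is then at most `ε / 6` on `K` and at most
`‖F x‖ ≤ 1` elsewhere. For a single law, a simple function close to `F` in mean is enough.
-/

section EmpiricalDeviation

variable {α E : Type*} [MeasurableSpace α] [NormedAddCommGroup E] [NormedSpace ℝ E]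

/-- The deviation of the empirical mean of `F` over the sample `xs` from its mean under the
sampling law `P`. For `F x = a(x, ·)` with values in `L¹(μ)`, this is `A* E_N(g) - A* g`. The
empirical mean over an empty sample is `0`. -/
noncomputable def empiricalDeviation (F : α → E) (P : Measure α) {N : ℕ} (xs : Fin N → α) : E :=
  (N : ℝ)⁻¹ • ∑ i, F (xs i) - ∫ x, F x ∂P

lemma empiricalDeviation_add {F G : α → E} {P : Measure α} (hF : Integrable F P)
    (hG : Integrable G P) {N : ℕ} (xs : Fin N → α) :
    empiricalDeviation (F + G) P xs = empiricalDeviation F P xs + empiricalDeviation G P xs := by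
  simp only [empiricalDeviation, Pi.add_apply, Finset.sum_add_distrib, smul_add,
    integral_add hF hG]
  abel

lemma empiricalDeviation_neg (F : α → E) (P : Measure α) {N : ℕ} (xs : Fin N → α) :
    empiricalDeviation (-F) P xs = -empiricalDeviation F P xs := by
  simp only [empiricalDeviation, Pi.neg_apply, Finset.sum_neg_distrib, smul_neg, integral_neg]
  abel

lemma empiricalDeviation_smul_const [CompleteSpace E] (f : α → ℝ) (v : E) (P : Measure α)
    {N : ℕ} (xs : Fin N → α) :
    empiricalDeviation (fun x => f x • v) P xs = empiricalDeviation f P xs • v := by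
  simp only [empiricalDeviation, integral_smul_const, ← Finset.sum_smul, sub_smul, smul_assoc]

lemma norm_empiricalDeviation_le (F : α → E) (P : Measure α) {N : ℕ} (xs : Fin N → α) :
    ‖empiricalDeviation F P xs‖ ≤
      empiricalDeviation (fun x => ‖F x‖) P xs + 2 * ∫ x, ‖F x‖ ∂P := by
  have hmean : ‖(N : ℝ)⁻¹ • ∑ i, F (xs i)‖ ≤ (N : ℝ)⁻¹ • ∑ i, ‖F (xs i)‖ := by
    rw [norm_smul, Real.norm_of_nonneg (by positivity), smul_eq_mul]
    gcongr
    exact norm_sum_le _ _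
  have htri := norm_sub_le ((N : ℝ)⁻¹ • ∑ i, F (xs i)) (∫ x, F x ∂P)
  have hint := norm_integral_le_integral_norm (μ := P) F
  simp only [empiricalDeviation]
  linarith

end EmpiricalDeviation

/-- Under every sampling law in `S`, the empirical mean of `F` over `N` independent samples deviates
from its mean by more than `ε` with probability at most `c₁ * exp (-c₂ * N)`, where the constants
depend neither on `N` nor on the law. Since the theorem bounds the deviation over a class of laws
which depends on `ε`, the threshold `ε` is a parameter. -/
def HasExpDeviationBound {α E : Type*} [MeasurableSpace α] [NormedAddCommGroup E]
    [NormedSpace ℝ E] (F : α → E) (S : Set (ProbabilityMeasure α)) (ε : ℝ) : Prop :=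
  ∃ c₁ c₂ : ℝ, 0 < c₂ ∧ ∀ P ∈ S, ∀ N : ℕ,
    (Measure.pi fun _ : Fin N => (P : Measure α))
        {xs | ε < ‖empiricalDeviation F (P : Measure α) xs‖}
      ≤ ENNReal.ofReal (c₁ * Real.exp (-c₂ * N))

lemma measureReal_le_empiricalDeviation_le {α : Type*} [MeasurableSpace α] {P : Measure α}
    [IsProbabilityMeasure P] {f : α → ℝ} (hf : AEMeasurable f P) {C : ℝ}
    (hC : ∀ x, |f x| ≤ C) {t : ℝ} (ht : 0 ≤ t) (N : ℕ) :
    (Measure.pi fun _ : Fin N => P).real {xs | t ≤ empiricalDeviation f P xs}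
      ≤ Real.exp (-(t ^ 2 / (2 * C ^ 2)) * N) := by
  rcases N.eq_zero_or_pos with rfl | hN
  · simp
  have hN₀ : (0 : ℝ) < N := by exact_mod_cast hN
  have hwidth : ‖C - -C‖₊ / 2 = ‖C‖₊ := by
    rw [sub_neg_eq_add, ← two_mul, nnnorm_mul, Real.nnnorm_two]
    field_simp
  have hsubG (i : Fin N) : ProbabilityTheory.HasSubgaussianMGF
      (fun xs : Fin N → α => f (xs i) - ∫ x, f x ∂P) (‖C‖₊ ^ 2) (Measure.pi fun _ => P) := by
    refine .of_map (X := fun x => f x - ∫ x, f x ∂P) (measurable_pi_apply i).aemeasurable ?_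
    rw [(measurePreserving_eval (fun _ : Fin N => P) i).map_eq, ← hwidth]
    exact ProbabilityTheory.hasSubgaussianMGF_of_mem_Icc hf (.of_forall fun x => abs_le.1 (hC x))
  have hindep := ProbabilityTheory.iIndepFun_pi (μ := fun _ : Fin N => P)
    (X := fun _ x => f x - ∫ x, f x ∂P) (fun _ => hf.sub_const _)
  have hdev (xs : Fin N → α) : t ≤ empiricalDeviation f P xs ↔
      t * N ≤ ∑ i, (f (xs i) - ∫ x, f x ∂P) := by
    simp only [empiricalDeviation, Finset.sum_sub_distrib, Finset.sum_const, Finset.card_univ,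
      Fintype.card_fin, nsmul_eq_mul, smul_eq_mul]
    rw [← mul_le_mul_iff_left₀ hN₀]
    field_simp
  simp only [hdev]
  refine (ProbabilityTheory.HasSubgaussianMGF.measure_sum_ge_le_of_iIndepFun hindep
    (fun i _ => hsubG i) (s := Finset.univ) (ε := t * N) (by positivity)).trans_eq ?_
  simp only [Finset.sum_const, Finset.card_univ, Fintype.card_fin, nsmul_eq_mul, NNReal.coe_mul,
    NNReal.coe_natCast, NNReal.coe_pow, coe_nnnorm, Real.norm_eq_abs, sq_abs]
  congr 1
  field_simp

lemma exists_simpleFunc_norm_sub_lt_of_totallyBounded {α E : Type*} [MeasurableSpace α]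
    [SeminormedAddCommGroup E] [MeasurableSpace E] [OpensMeasurableSpace E] {F : α → E}
    (hF : Measurable F) {K : Set α} (hK : TotallyBounded (F '' K)) {δ : ℝ} (hδ : 0 < δ) :
    ∃ s : SimpleFunc α E, (∀ x ∈ K, ‖F x - s x‖ < δ) ∧ ∀ x, ‖F x - s x‖ ≤ ‖F x‖ := by
  obtain ⟨t, ht, hKt⟩ := Metric.totallyBounded_iff.1 hK δ hδ
  obtain ⟨l, hl⟩ : ∃ l : List E, ∀ v, v ∈ l ↔ v ∈ t := ⟨ht.toFinset.toList, by simp⟩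
  let centers (n : ℕ) : E := (0 :: l).getD n 0
  refine ⟨(SimpleFunc.nearestPt centers l.length).comp F hF, fun x hx => ?_, fun x => ?_⟩
  · obtain ⟨v, hvt, hv⟩ := Set.mem_iUnion₂.1 (hKt (Set.mem_image_of_mem F hx))
    obtain ⟨n, hn, rfl⟩ := List.getElem_of_mem ((hl v).2 hvt)
    have hcenter : centers (n + 1) = l[n] := by simp [centers, hn]
    have hle := SimpleFunc.edist_nearestPt_le centers (F x) (Nat.succ_le_of_lt hn)
    rw [hcenter, edist_dist, edist_dist, ENNReal.ofReal_le_ofReal_iff dist_nonneg] at hle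
    rw [SimpleFunc.coe_comp, Function.comp_apply, ← dist_eq_norm, dist_comm]
    exact hle.trans_lt (by simpa [dist_comm] using hv)
  · have hle := SimpleFunc.edist_nearestPt_le centers (F x) l.length.zero_le
    rw [edist_dist, edist_dist, ENNReal.ofReal_le_ofReal_iff dist_nonneg] at hle
    rw [SimpleFunc.coe_comp, Function.comp_apply, ← dist_eq_norm, dist_comm]
    simpa [centers] using hle

lemma integral_le_add_one_sub_measureReal {α : Type*} [MeasurableSpace α] {P : Measure α}
    [IsProbabilityMeasure P] {h : α → ℝ} (hh : Integrable h P) {δ : ℝ} (hδ : 0 ≤ δ) {K : Set α}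
    (hK : ∀ x ∈ K, h x ≤ δ) (h_one : ∀ x, h x ≤ 1) : ∫ x, h x ∂P ≤ δ + (1 - P.real K) := by
  have hbad : NullMeasurableSet {x | h x ≤ δ}ᶜ P :=
    (nullMeasurableSet_le hh.aemeasurable aemeasurable_const).compl
  have hpointwise (x : α) : h x ≤ δ + {x | h x ≤ δ}ᶜ.indicator 1 x := by
    by_cases hx : h x ≤ δ
    · simp [hx]
    · simpa [hx] using (h_one x).trans (le_add_of_nonneg_left hδ)
  have hind : Integrable ({x | h x ≤ δ}ᶜ.indicator (1 : α → ℝ)) P :=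
    (integrable_const (1 : ℝ)).indicator₀ hbad
  calc
    ∫ x, h x ∂P ≤ ∫ x, (δ + {x | h x ≤ δ}ᶜ.indicator 1 x) ∂P :=
      integral_mono hh ((integrable_const δ).add hind) hpointwise
    _ = δ + (1 - P.real {x | h x ≤ δ}) := by
      rw [integral_add (integrable_const δ) hind, integral_indicator₀ hbad]
      simp [probReal_compl_eq_one_sub₀ hbad.of_compl]
    _ ≤ δ + (1 - P.real K) := by
      gcongr
      exacts [measure_ne_top _ _, hK]

namespace HasExpDeviationBound

variable {α E E₁ E₂ : Type*} [MeasurableSpace α] [NormedAddCommGroup E] [NormedSpace ℝ E]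
  [NormedAddCommGroup E₁] [NormedSpace ℝ E₁] [NormedAddCommGroup E₂] [NormedSpace ℝ E₂]
  {S : Set (ProbabilityMeasure α)} {ε ε₁ ε₂ : ℝ}

lemma of_abs_le {f : α → ℝ} (hf : ∀ P ∈ S, AEMeasurable f (P : Measure α)) {C : ℝ}
    (hC : ∀ x, |f x| ≤ C) (hε : 0 < ε) : HasExpDeviationBound f S ε := by
  have hC' (x : α) : |f x| ≤ |C| + 1 := by linarith [hC x, le_abs_self C]
  refine ⟨2, ε ^ 2 / (2 * (|C| + 1) ^ 2), by positivity, fun P hP N => ?_⟩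
  have hcover : {xs : Fin N → α | ε < ‖empiricalDeviation f (P : Measure α) xs‖} ⊆
      {xs | ε ≤ empiricalDeviation f (P : Measure α) xs} ∪
      {xs | ε ≤ empiricalDeviation (-f) (P : Measure α) xs} := by
    intro xs hxs
    simp only [Set.mem_union, Set.mem_ofPred_eq, empiricalDeviation_neg] at hxs ⊢
    exact le_abs.1 hxs.le
  rw [← ofReal_measureReal, two_mul]
  refine ENNReal.ofReal_le_ofReal ((measureReal_mono hcover).trans
    ((measureReal_union_le _ _).trans ?_))
  rw [← two_mul, two_mul]
  exact add_le_add (measureReal_le_empiricalDeviation_le (hf P hP) hC' hε.le N)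
    (measureReal_le_empiricalDeviation_le (hf P hP).neg (by simpa using hC') hε.le N)

lemma of_lt_imp_or {F : α → E} {G : α → E₁} {H : α → E₂} (hG : HasExpDeviationBound G S ε₁)
    (hH : HasExpDeviationBound H S ε₂)
    (hFGH : ∀ P ∈ S, ∀ (N : ℕ) (xs : Fin N → α),
      ε < ‖empiricalDeviation F (P : Measure α) xs‖ →
        ε₁ < ‖empiricalDeviation G (P : Measure α) xs‖ ∨
        ε₂ < ‖empiricalDeviation H (P : Measure α) xs‖) :
    HasExpDeviationBound F S ε := by
  obtain ⟨c₁, c₂, hc₂, hG⟩ := hG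
  obtain ⟨d₁, d₂, hd₂, hH⟩ := hH
  have hexp {c d : ℝ} (h : min c₂ d₂ ≤ d) (N : ℕ) :
      c * Real.exp (-d * N) ≤ |c| * Real.exp (-min c₂ d₂ * N) := by
    gcongr
    exact le_abs_self c
  refine ⟨|c₁| + |d₁|, min c₂ d₂, lt_min hc₂ hd₂, fun P hP N => ?_⟩
  rw [add_mul, ENNReal.ofReal_add (by positivity) (by positivity)]
  calc
    _ ≤ (Measure.pi fun _ : Fin N => (P : Measure α))
          ({xs | ε₁ < ‖empiricalDeviation G (P : Measure α) xs‖} ∪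
            {xs | ε₂ < ‖empiricalDeviation H (P : Measure α) xs‖}) :=
      measure_mono fun xs hxs => hFGH P hP N xs hxs
    _ ≤ _ := measure_union_le _ _
    _ ≤ _ := add_le_add
      ((hG P hP N).trans (ENNReal.ofReal_le_ofReal (hexp (min_le_left _ _) N)))
      ((hH P hP N).trans (ENNReal.ofReal_le_ofReal (hexp (min_le_right _ _) N)))

lemma add {F G : α → E} (hF : HasExpDeviationBound F S ε₁) (hG : HasExpDeviationBound G S ε₂)
    (hF_int : ∀ P ∈ S, Integrable F (P : Measure α))
    (hG_int : ∀ P ∈ S, Integrable G (P : Measure α)) :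
    HasExpDeviationBound (F + G) S (ε₁ + ε₂) := by
  refine hF.of_lt_imp_or hG fun P hP N xs hxs => ?_
  rw [empiricalDeviation_add (hF_int P hP) (hG_int P hP)] at hxs
  exact lt_or_lt_of_add_lt_add (hxs.trans_le (norm_add_le _ _))

lemma smul_const [CompleteSpace E] {f : α → ℝ} (v : E) (hε : 0 < ε)
    (hf : ∀ δ : ℝ, 0 < δ → HasExpDeviationBound f S δ) :
    HasExpDeviationBound (fun x => f x • v) S ε := by
  have hf' := hf (ε / (‖v‖ + 1)) (by positivity)
  refine hf'.of_lt_imp_or hf' fun P _ N xs hxs => Or.inl ?_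
  rw [empiricalDeviation_smul_const, norm_smul] at hxs
  rw [div_lt_iff₀ (by positivity)]
  exact hxs.trans_le (by gcongr; linarith)

lemma simpleFunc [CompleteSpace E] (s : SimpleFunc α E) (hε : 0 < ε) :
    HasExpDeviationBound s S ε := by
  induction s using SimpleFunc.induction generalizing ε with
  | @const c t ht =>
    have hind (δ : ℝ) (hδ : 0 < δ) : HasExpDeviationBound (t.indicator (1 : α → ℝ)) S δ := by
      refine of_abs_le (C := 1) (fun _ _ => (measurable_one.indicator ht).aemeasurable)
        (fun x => ?_) hδ
      by_cases hx : x ∈ t <;> simp [hx]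
    convert smul_const c hε hind using 2 with x
    by_cases hx : x ∈ t <;> simp [hx]
  | @add f g _ hf hg =>
    rw [← add_halves ε, SimpleFunc.coe_add]
    exact (hf (half_pos hε)).add (hg (half_pos hε)) (fun _ _ => f.integrable_of_isFiniteMeasure)
      (fun _ _ => g.integrable_of_isFiniteMeasure)

lemma of_integral_norm_sub_simpleFunc_le [CompleteSpace E] {F : α → E}
    (hF : ∀ P ∈ S, AEStronglyMeasurable F (P : Measure α)) {C : ℝ} (hC : ∀ x, ‖F x‖ ≤ C)
    (s : SimpleFunc α E) (hε : 0 < ε)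
    (hs : ∀ P ∈ S, ∫ x, ‖F x - s x‖ ∂(P : Measure α) ≤ ε / 3) :
    HasExpDeviationBound F S ε := by
  obtain ⟨D, hD⟩ := s.exists_forall_norm_le
  have hF_int (P) (hP : P ∈ S) : Integrable F (P : Measure α) :=
    .of_bound (hF P hP) C (.of_forall hC)
  have hs_int (P : ProbabilityMeasure α) : Integrable s (P : Measure α) :=
    s.integrable_of_isFiniteMeasure
  have herr : HasExpDeviationBound (fun x => ‖F x - s x‖) S (ε / 6) :=
    of_abs_le (C := C + D) (fun P hP => ((hF_int P hP).sub (hs_int P)).norm.aemeasurable)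
      (fun x => by rw [abs_norm]; exact norm_sub_le_of_le (hC x) (hD x)) (by positivity)
  refine (simpleFunc s (by positivity : 0 < ε / 6)).of_lt_imp_or herr fun P hP N xs hxs => ?_
  have hsplit : empiricalDeviation F (P : Measure α) xs =
      empiricalDeviation s (P : Measure α) xs + empiricalDeviation (F - ⇑s) (P : Measure α) xs := by
    rw [← empiricalDeviation_add (hs_int P) ((hF_int P hP).sub (hs_int P)), add_sub_cancel]
  have herr_le := norm_empiricalDeviation_le (F - ⇑s) (P : Measure α) xs
  simp only [Pi.sub_apply] at herr_le
  by_contra! hsmall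
  have habs := (le_abs_self _).trans hsmall.2
  rw [hsplit] at hxs
  linarith [norm_add_le (empiricalDeviation s (P : Measure α) xs)
    (empiricalDeviation (F - ⇑s) (P : Measure α) xs), hs P hP, hsmall.1]

lemma singleton [CompleteSpace E] {P : ProbabilityMeasure α} {F : α → E}
    (hF : AEStronglyMeasurable F (P : Measure α)) {C : ℝ} (hC : ∀ x, ‖F x‖ ≤ C) (hε : 0 < ε) :
    HasExpDeviationBound F {P} ε := by
  have hF_int : Integrable F (P : Measure α) := .of_bound hF C (.of_forall hC)
  obtain ⟨s, hs, -⟩ := (memLp_one_iff_integrable.2 hF_int).exists_simpleFunc_eLpNorm_sub_lt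
    ENNReal.one_ne_top (ENNReal.ofReal_pos.2 (by positivity : 0 < ε / 3)).ne'
  refine of_integral_norm_sub_simpleFunc_le (by simpa using hF) hC s hε ?_
  rintro _ rfl
  rw [eLpNorm_one_eq_lintegral_enorm] at hs
  simp only [← Pi.sub_apply F s]
  rw [integral_norm_eq_lintegral_enorm (hF.sub s.aestronglyMeasurable)]
  exact ENNReal.toReal_le_of_le_ofReal (by positivity) hs.le

lemma of_continuous_of_isCompact [TopologicalSpace α] [OpensMeasurableSpace α] [CompleteSpace E]
    [SecondCountableTopologyEither α E] {F : α → E} (hF : Continuous F)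
    (hF_one : ∀ x, ‖F x‖ ≤ 1) {K : Set α} (hK : IsCompact K) (hε : 0 < ε) :
    HasExpDeviationBound F {P | 1 - ε / 6 ≤ (P : Measure α).real K} ε := by
  borelize E
  obtain ⟨s, hsK, hs⟩ := exists_simpleFunc_norm_sub_lt_of_totallyBounded hF.measurable
    (hK.image hF).totallyBounded (by positivity : 0 < ε / 6)
  refine of_integral_norm_sub_simpleFunc_le (fun _ _ => hF.aestronglyMeasurable) hF_one s hε
    fun P hP => ?_
  have hF_int : Integrable F (P : Measure α) :=
    .of_bound hF.aestronglyMeasurable 1 (.of_forall hF_one)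
  have herr := integral_le_add_one_sub_measureReal
    (hF_int.sub s.integrable_of_isFiniteMeasure).norm (by positivity : 0 ≤ ε / 6)
    (fun x hx => (hsK x hx).le) (fun x => (hs x).trans (hF_one x))
  simp only [Pi.sub_apply] at herr
  rw [Set.mem_ofPred_eq] at hP
  linarith

end HasExpDeviationBound

section KernelToL1

variable {α β G : Type*} [MeasurableSpace α] [MeasurableSpace β] [NormedAddCommGroup G]
  {μ : Measure β} {a : α → β → G}

lemma dist_toL1_eq_integral_norm_sub {f g : β → G} (hf : Integrable f μ) (hg : Integrable g μ) :
    dist (hf.toL1 f) (hg.toL1 g) = ∫ y, ‖f y - g y‖ ∂μ := by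
  rw [dist_eq_norm, ← Integrable.toL1_sub, L1.norm_of_fun_eq_integral_norm]
  rfl

lemma integrable_uncurry_of_norm_toL1_le [SFinite μ] {P : Measure α} [IsFiniteMeasure P]
    (ha : AEStronglyMeasurable (Function.uncurry a) (P.prod μ)) (ha_int : ∀ x, Integrable (a x) μ)
    (ha_toL1 : AEStronglyMeasurable (fun x => (ha_int x).toL1 (a x)) P) {C : ℝ}
    (hC : ∀ x, ‖(ha_int x).toL1 (a x)‖ ≤ C) : Integrable (Function.uncurry a) (P.prod μ) := by
  refine (integrable_prod_iff ha).2 ⟨.of_forall ha_int, ?_⟩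
  have hnorm := (Integrable.of_bound ha_toL1 C (.of_forall hC)).norm
  simp only [L1.norm_of_fun_eq_integral_norm] at hnorm
  exact hnorm

variable [NormedSpace ℝ G] [CompleteSpace G] {P : Measure α} [SFinite P] [SFinite μ]

lemma coeFn_integral_toL1 (ha : Integrable (Function.uncurry a) (P.prod μ))
    (ha_int : ∀ x, Integrable (a x) μ)
    (ha_toL1 : AEStronglyMeasurable (fun x => (ha_int x).toL1 (a x)) P) :
    (∫ x, (ha_int x).toL1 (a x) ∂P : β →₁[μ] G) =ᵐ[μ] fun y => ∫ x, a x y ∂P := by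
  have hF : Integrable (fun x => (ha_int x).toL1 (a x)) P := by
    refine (integrable_norm_iff ha_toL1).1 ?_
    simp only [L1.norm_of_fun_eq_integral_norm]
    exact ha.integral_norm_prod_left
  refine Integrable.ae_eq_of_forall_setIntegral_eq _ _ (L1.integrable_coeFn _)
    ha.integral_prod_right fun s _ _ => ?_
  obtain ⟨T, hT⟩ : ∃ T : (β →₁[μ] G) →L[ℝ] G, ∀ f, T f = ∫ y in s, f y ∂μ :=
    ⟨L1.integralCLM.comp (LpToLpRestrictCLM β G ℝ μ 1 s), fun f => by
      rw [ContinuousLinearMap.comp_apply, ← L1.integral_eq, L1.integral_eq_integral,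
        integral_congr_ae (LpToLpRestrictCLM_coeFn ℝ s f)]⟩
  have hswap : Integrable (Function.uncurry a) (P.prod (μ.restrict s)) := by
    rw [← Measure.restrict_univ (μ := P), Measure.prod_restrict]
    exact ha.restrict
  rw [← hT, ← T.integral_comp_comm hF, ← integral_integral_swap hswap]
  refine integral_congr_ae (.of_forall fun x => ?_)
  simp only [hT]
  exact integral_congr_ae (ae_restrict_of_ae (ha_int x).coeFn_toL1)

lemma norm_empiricalDeviation_toL1 (ha : Integrable (Function.uncurry a) (P.prod μ))
    (ha_int : ∀ x, Integrable (a x) μ)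
    (ha_toL1 : AEStronglyMeasurable (fun x => (ha_int x).toL1 (a x)) P)
    {N : ℕ} (xs : Fin N → α) :
    ‖empiricalDeviation (fun x => (ha_int x).toL1 (a x)) P xs‖ =
      ∫ y, ‖empiricalDeviation (fun x => a x y) P xs‖ ∂μ := by
  rw [L1.norm_eq_integral_norm]
  refine integral_congr_ae ?_
  filter_upwards [Lp.coeFn_sub ((N : ℝ)⁻¹ • ∑ i, (ha_int (xs i)).toL1 (a (xs i)))
      (∫ x, (ha_int x).toL1 (a x) ∂P),
    Lp.coeFn_smul (N : ℝ)⁻¹ (∑ i, (ha_int (xs i)).toL1 (a (xs i))),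
    Lp.coeFn_finsetSum Finset.univ (fun i => (ha_int (xs i)).toL1 (a (xs i))),
    ae_all_iff.2 fun i => (ha_int (xs i)).coeFn_toL1,
    coeFn_integral_toL1 ha ha_int ha_toL1] with y hsub hsmul hsum hsample hmean
  simp only [empiricalDeviation, hsub, hsmul, hsum, hsample, hmean, Pi.sub_apply, Pi.smul_apply,
    Finset.sum_apply]

end KernelToL1

section Density

variable {α : Type*} [MeasurableSpace α] {μ : Measure α} {g : α → ℝ}

lemma isProbabilityMeasure_withDensity_ofReal (hg_int : Integrable g μ) (hg_nonneg : 0 ≤ᵐ[μ] g)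
    (hg_one : ∫ x, g x ∂μ = 1) :
    IsProbabilityMeasure (μ.withDensity fun x => ENNReal.ofReal (g x)) := by
  refine ⟨?_⟩
  rw [withDensity_apply _ .univ, Measure.restrict_univ,
    ← ofReal_integral_eq_lintegral_ofReal hg_int hg_nonneg, hg_one, ENNReal.ofReal_one]

lemma integral_withDensity_ofReal (hg : Measurable g) (hg_nonneg : 0 ≤ᵐ[μ] g) (f : α → ℝ) :
    ∫ x, f x ∂(μ.withDensity fun x => ENNReal.ofReal (g x)) = ∫ x, g x * f x ∂μ := by
  rw [integral_withDensity_eq_integral_toReal_smul hg.ennreal_ofReal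
    (.of_forall fun _ => ENNReal.ofReal_lt_top)]
  refine integral_congr_ae ?_
  filter_upwards [hg_nonneg] with x hx
  rw [ENNReal.toReal_ofReal hx, smul_eq_mul]

lemma measureReal_withDensity_ofReal [SFinite μ] (hg_int : Integrable g μ)
    (hg_nonneg : 0 ≤ᵐ[μ] g) (s : Set α) :
    (μ.withDensity fun x => ENNReal.ofReal (g x)).real s = ∫ x in s, g x ∂μ := by
  rw [measureReal_def, withDensity_apply',
    ← ofReal_integral_eq_lintegral_ofReal hg_int.restrict (ae_restrict_of_ae hg_nonneg),
    ENNReal.toReal_ofReal (integral_nonneg_of_ae (ae_restrict_of_ae hg_nonneg))]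

end Density

theorem markov_empirical_L1_exponential_bound_general
    {α β : Type*} [MeasurableSpace α] [TopologicalSpace α] [SecondCountableTopology α]
    [OpensMeasurableSpace α] [MeasurableSpace β] (μ : Measure β) [SFinite μ] (a : α → β → ℝ)
    (ha_meas : Measurable (Function.uncurry a)) (ha_int : ∀ x, Integrable (a x) μ)
    (ha_norm : ∀ x, ∫ y, |a x y| ∂μ ≤ 1)
    (ha_cont : Continuous fun x => (ha_int x).toL1 (a x)) :
    (∀ P : ProbabilityMeasure α, ∀ ε : ℝ, 0 < ε → ∃ c₁ c₂ : ℝ, 0 < c₂ ∧ ∀ N : ℕ,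
      (Measure.pi fun _ : Fin N => (P : Measure α))
          {xs | ε < ∫ y, |(N : ℝ)⁻¹ * (∑ i, a (xs i) y) - ∫ x, a x y ∂(P : Measure α)| ∂μ}
        ≤ ENNReal.ofReal (c₁ * Real.exp (-c₂ * N)))
    ∧ (∀ ε : ℝ, 0 < ε → ∀ K : Set α, IsCompact K → ∃ c₁ c₂ : ℝ, 0 < c₂ ∧
        ∀ P : ProbabilityMeasure α, 1 - ε / 6 ≤ (P : Measure α).real K → ∀ N : ℕ,
          (Measure.pi fun _ : Fin N => (P : Measure α))
              {xs | ε < ∫ y, |(N : ℝ)⁻¹ * (∑ i, a (xs i) y) - ∫ x, a x y ∂(P : Measure α)| ∂μ}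
            ≤ ENNReal.ofReal (c₁ * Real.exp (-c₂ * N))) := by
  have hF_one (x : α) : ‖(ha_int x).toL1 (a x)‖ ≤ 1 := by
    simpa only [L1.norm_of_fun_eq_integral_norm, Real.norm_eq_abs] using ha_norm x
  have ha_prod (P : ProbabilityMeasure α) :
      Integrable (Function.uncurry a) ((P : Measure α).prod μ) :=
    integrable_uncurry_of_norm_toL1_le ha_meas.aestronglyMeasurable ha_int
      ha_cont.aestronglyMeasurable hF_one
  have hnorm (P : ProbabilityMeasure α) {N : ℕ} (xs : Fin N → α) :=
    norm_empiricalDeviation_toL1 (ha_prod P) ha_int ha_cont.aestronglyMeasurable xs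
  simp only [empiricalDeviation, Real.norm_eq_abs, smul_eq_mul] at hnorm
  simp only [← hnorm]
  refine ⟨fun P ε hε => ?_, fun ε hε K hK => ?_⟩
  · simpa only [HasExpDeviationBound, empiricalDeviation, Set.mem_singleton_iff, forall_eq] using
      HasExpDeviationBound.singleton ha_cont.aestronglyMeasurable hF_one hε
  · exact HasExpDeviationBound.of_continuous_of_isCompact ha_cont hF_one hK hε

/-- Lemma 8: if `x ↦ a(x,·)` is continuous for the L¹-norm, then for every `ε > 0`,
under i.i.d. sampling of size `N` from a density `g`,
`P[‖A* E_N(g) − A* g‖₁ > ε] → 0` exponentially fast in `N`; moreover, for every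
fixed compact set `K`, the constants can be chosen uniformly over all densities `g`
with `∫_K g dμ ≥ 1 − ε/6`. -/
theorem markov_empirical_L1_exponential_bound
    {α : Type*} [MeasurableSpace α] [MetricSpace α] [CompleteSpace α]
    [SecondCountableTopology α] [BorelSpace α]
    (μ : Measure α) [SigmaFinite μ]
    (a : α → α → ℝ)
    (ha_meas : Measurable (Function.uncurry a))
    (ha_nonneg : ∀ x' x, 0 ≤ a x' x)
    (ha_kernel : ∀ x', ∫ x, a x' x ∂μ = 1)
    -- L¹-continuity of x ↦ a(x,·)
    (ha_cont : ∀ x₀ : α, ∀ δ > (0:ℝ), ∃ η > (0:ℝ), ∀ x, dist x x₀ < η →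
      (∫ y, |a x y - a x₀ y| ∂μ) < δ) :
    -- exponential convergence for each fixed density g
    (∀ g : α → ℝ, Measurable g → (∀ x, 0 ≤ g x) → Integrable g μ →
      (∫ x, g x ∂μ) = 1 →
      ∀ ε : ℝ, 0 < ε → ∃ c₁ c₂ : ℝ, 0 < c₂ ∧ ∀ N : ℕ,
        (Measure.pi fun _ : Fin N => μ.withDensity fun x => ENNReal.ofReal (g x))
            {xs | ε < ∫ y, |(N : ℝ)⁻¹ * (∑ i, a (xs i) y)
                - ∫ x', g x' * a x' y ∂μ| ∂μ}
          ≤ ENNReal.ofReal (c₁ * Real.exp (-c₂ * N)))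
    -- with constants uniform over densities concentrated on a fixed compact set
    ∧ (∀ ε : ℝ, 0 < ε → ∀ K : Set α, IsCompact K →
        ∃ c₁ c₂ : ℝ, 0 < c₂ ∧
          ∀ g : α → ℝ, Measurable g → (∀ x, 0 ≤ g x) → Integrable g μ →
            (∫ x, g x ∂μ) = 1 → (1 - ε / 6 ≤ ∫ x in K, g x ∂μ) →
            ∀ N : ℕ,
              (Measure.pi fun _ : Fin N => μ.withDensity fun x => ENNReal.ofReal (g x))
                  {xs | ε < ∫ y, |(N : ℝ)⁻¹ * (∑ i, a (xs i) y)
                      - ∫ x', g x' * a x' y ∂μ| ∂μ}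
                ≤ ENNReal.ofReal (c₁ * Real.exp (-c₂ * N))) := by
  have ha_int (x : α) : Integrable (a x) μ := .of_integral_ne_zero (by simp [ha_kernel x])
  have ha_toL1 : Continuous fun x => (ha_int x).toL1 (a x) := by
    simpa only [Metric.continuous_iff, dist_toL1_eq_integral_norm_sub, Real.norm_eq_abs]
      using ha_cont
  obtain ⟨hfixed, huniform⟩ := markov_empirical_L1_exponential_bound_general μ a ha_meas ha_int
    (fun x => by simp only [abs_of_nonneg (ha_nonneg x _), ha_kernel x, le_refl]) ha_toL1
  refine ⟨fun g hg hg₀ hg_int hg₁ ε hε => ?_, fun ε hε K hK => ?_⟩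
  · have hprob := isProbabilityMeasure_withDensity_ofReal hg_int (.of_forall hg₀) hg₁
    simpa only [ProbabilityMeasure.coe_mk, integral_withDensity_ofReal hg (.of_forall hg₀)]
      using hfixed ⟨_, hprob⟩ ε hε
  · obtain ⟨c₁, c₂, hc₂, hbound⟩ := huniform ε hε K hK
    refine ⟨c₁, c₂, hc₂, fun g hg hg₀ hg_int hg₁ hgK => ?_⟩
    have hprob := isProbabilityMeasure_withDensity_ofReal hg_int (.of_forall hg₀) hg₁
    rw [← measureReal_withDensity_ofReal hg_int (.of_forall hg₀)] at hgK
    simpa only [ProbabilityMeasure.coe_mk, integral_withDensity_ofReal hg (.of_forall hg₀)]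
      using hbound ⟨_, hprob⟩ hgK
end

section
/- (Theorem 1) If x ↦ a_t(x,·) is continuous with respect to the L₁-norm for every t, and if 0 < b_t(x, y) ≤ C(t, y) < ∞ for all t, x, y, then for all t and all observation sequences y_{1:t}, the L₁-distance ‖f^N_{t|t} − f_{t|t}‖₁ between the particle-filter approximation and the true filter density converges to 0 in probability as N → ∞. -/
open MeasureTheory ProbabilityTheory

/-- The Markov operator `A_t*`. -/
noncomputable def markovOp {α : Type*} [MeasurableSpace α] (μ : Measure α)
    (a : α → α → ℝ) (f : α → ℝ) : α → ℝ :=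
  fun x => ∫ x', f x' * a x' x ∂μ

/-- The true filter densities: `f_{0|0} = a_0` and
`f_{t|t} = B(A_t* f_{t-1|t-1}, b_t)` (the observations being absorbed into `b_t`). -/
noncomputable def trueFilter {α : Type*} [MeasurableSpace α] (μ : Measure α)
    (a0 : α → ℝ) (a : ℕ → α → α → ℝ) (b : ℕ → α → ℝ) : ℕ → α → ℝ
  | 0 => a0
  | (t + 1) => bayesOp μ (markovOp μ (a (t + 1)) (trueFilter μ a0 a b t)) (b (t + 1))

/-- The particle filter densities: `f^N_{0|0} = a_0` and
`f^N_{t|t} = B(A_t* E_N(f^N_{t-1|t-1}), b_t)`, where `E_N` is the empirical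
distribution of the particles `(X_{j,t-1})_{j≤N}` at time `t-1`. -/
noncomputable def particleFilter {α Ω : Type*} [MeasurableSpace α] (μ : Measure α)
    (a0 : α → ℝ) (a : ℕ → α → α → ℝ) (b : ℕ → α → ℝ)
    {N : ℕ} (X : ℕ → Fin N → Ω → α) : ℕ → Ω → α → ℝ
  | 0 => fun _ => a0
  | (t + 1) => fun ω =>
      bayesOp μ (fun x => (N : ℝ)⁻¹ * ∑ j, a (t + 1) (X t j ω) x) (b (t + 1))

/-- The σ-field generated by the particles before time `t`. -/
def pastFiltration {α Ω : Type*} [MeasurableSpace α] [MeasurableSpace Ω]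
    {N : ℕ} (X : ℕ → Fin N → Ω → α) (t : ℕ) : MeasurableSpace Ω :=
  ⨆ s : Fin t, MeasurableSpace.comap (fun ω => fun j : Fin N => X s j ω) inferInstance

/-!
A jointly measurable transition density, viewed as `x ↦ a x ∈ L¹(μ)`, takes values on the unit
sphere of a separable Banach space, hence it is strongly measurable. It can therefore be
approximated by simple functions, which reduces `L¹(μ)`-convergence of the predicted densities to
convergence in probability of `∫ φ` under the empirical distributions for scalar bounded `φ`.
The latter is a law of large numbers: given the past, the centred terms `φ (X j)` are
orthogonal in `L²(P)`, so their average has second moment `O(1/N)`. Finally the Bayes update is,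
in `L¹(μ)`, Lipschitz at the true predicted density, with constant `2 C` over the normalisation of
that density, so consistency is passed from one time to the next.
-/

open Filter Topology
open scoped NNReal ENNReal

section ConvergenceInMeasure

variable {ι Ω E F : Type*} [MeasurableSpace Ω] {P : Measure Ω} {l : Filter ι}

lemma tendstoInMeasure_of_forall_dist_le_add [PseudoMetricSpace E] {f : ι → Ω → E} {g : Ω → E}
    (h : ∀ δ > 0, ∃ Z : ι → Ω → ℝ, TendstoInMeasure P Z l (fun _ => 0) ∧
      ∀ᶠ i in l, ∀ ω, dist (f i ω) (g ω) ≤ Z i ω + δ) :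
    TendstoInMeasure P f l g := by
  refine tendstoInMeasure_iff_dist.2 fun ε hε => ?_
  obtain ⟨Z, hZ, hfZ⟩ := h (ε / 2) (half_pos hε)
  refine tendsto_of_tendsto_of_tendsto_of_le_of_le' tendsto_const_nhds
    (tendstoInMeasure_iff_dist.1 hZ (ε / 2) (half_pos hε)) (.of_forall fun _ => zero_le) ?_
  filter_upwards [hfZ] with i hi
  refine measure_mono fun ω (hω : ε ≤ dist (f i ω) (g ω)) => ?_
  rw [Set.mem_ofPred_eq, Real.dist_0_eq_abs]
  linarith [hi ω, le_abs_self (Z i ω)]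

lemma tendstoInMeasure_of_dist_le [PseudoMetricSpace E] {f : ι → Ω → E} {g : Ω → E}
    {Z : ι → Ω → ℝ} (hZ : TendstoInMeasure P Z l (fun _ => 0))
    (h : ∀ᶠ i in l, ∀ ω, dist (f i ω) (g ω) ≤ Z i ω) : TendstoInMeasure P f l g :=
  tendstoInMeasure_of_forall_dist_le_add fun _ hδ =>
    ⟨Z, hZ, h.mono fun _ hi ω => (hi ω).trans (le_add_of_nonneg_right hδ.le)⟩

lemma tendstoInMeasure_dist [PseudoMetricSpace E] {f : ι → Ω → E} {g : Ω → E}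
    (hf : TendstoInMeasure P f l g) :
    TendstoInMeasure P (fun i ω => dist (f i ω) (g ω)) l (fun _ => 0) := by
  simpa only [tendstoInMeasure_iff_dist, Real.dist_0_eq_abs, abs_dist] using hf

lemma tendstoInMeasure_comp_lipschitzWith [PseudoEMetricSpace E] [PseudoEMetricSpace F]
    {f : ι → Ω → E} {g : Ω → E} {K : ℝ≥0} {φ : E → F} (hφ : LipschitzWith K φ)
    (hf : TendstoInMeasure P f l g) :
    TendstoInMeasure P (fun i ω => φ (f i ω)) l fun ω => φ (g ω) := fun ε hε =>
  tendsto_of_tendsto_of_tendsto_of_le_of_le tendsto_const_nhds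
    (hf (ε / K) (ENNReal.div_pos hε.ne' ENNReal.coe_ne_top)) (fun _ => zero_le) fun _ =>
    measure_mono fun _ hω => ENNReal.div_le_of_le_mul' (hω.trans (hφ _ _))

section SeminormedAddCommGroup

variable [SeminormedAddCommGroup E]

lemma tendstoInMeasure_add {f f' : ι → Ω → E} {g g' : Ω → E} (hf : TendstoInMeasure P f l g)
    (hf' : TendstoInMeasure P f' l g') :
    TendstoInMeasure P (fun i ω => f i ω + f' i ω) l fun ω => g ω + g' ω := by
  rw [tendstoInMeasure_iff_dist] at *
  intro ε hε
  have hsum := (hf (ε / 2) (half_pos hε)).add (hf' (ε / 2) (half_pos hε))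
  rw [add_zero] at hsum
  refine tendsto_of_tendsto_of_tendsto_of_le_of_le tendsto_const_nhds hsum (fun _ => zero_le)
    fun i => (measure_mono fun ω (hω : ε ≤ _) => ?_).trans (measure_union_le _ _)
  by_contra hlt
  simp only [Set.mem_union, Set.mem_ofPred_eq, not_or, not_le] at hlt
  linarith [dist_add_add_le (f i ω) (f' i ω) (g ω) (g' ω)]

lemma tendstoInMeasure_add_zero {f f' : ι → Ω → E} (hf : TendstoInMeasure P f l fun _ => 0)
    (hf' : TendstoInMeasure P f' l fun _ => 0) :
    TendstoInMeasure P (fun i ω => f i ω + f' i ω) l fun _ => 0 := by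
  simpa only [add_zero] using tendstoInMeasure_add hf hf'

lemma tendstoInMeasure_sum {κ : Type*} (s : Finset κ) {f : κ → ι → Ω → E} {g : κ → Ω → E}
    (hf : ∀ k ∈ s, TendstoInMeasure P (f k) l (g k)) :
    TendstoInMeasure P (fun i ω => ∑ k ∈ s, f k i ω) l fun ω => ∑ k ∈ s, g k ω := by
  classical
  induction s using Finset.induction_on with
  | empty => exact fun ε hε => by simpa [hε.ne'] using tendsto_const_nhds
  | insert k s hk ih =>
    simp only [Finset.sum_insert hk]
    exact tendstoInMeasure_add (hf k (s.mem_insert_self k))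
      (ih fun j hj => hf j (Finset.mem_insert_of_mem hj))

end SeminormedAddCommGroup

lemma tendstoInMeasure_const_mul {Z : ι → Ω → ℝ}
    (hZ : TendstoInMeasure P Z l (fun _ => 0)) (c : ℝ) :
    TendstoInMeasure P (fun i ω => c * Z i ω) l (fun _ => 0) := by
  simpa using tendstoInMeasure_comp_lipschitzWith (lipschitzWith_smul c) hZ

lemma tendstoInMeasure_of_tendsto_integral_sq [IsFiniteMeasure P] {Z : ι → Ω → ℝ}
    (hZ : ∀ᶠ i in l, Integrable (fun ω => Z i ω ^ 2) P)
    (hlim : Tendsto (fun i => ∫ ω, Z i ω ^ 2 ∂P) l (𝓝 0)) :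
    TendstoInMeasure P Z l (fun _ => 0) := by
  refine tendstoInMeasure_iff_measureReal_dist.2 fun ε hε => ?_
  refine tendsto_of_tendsto_of_tendsto_of_le_of_le' tendsto_const_nhds
    (by simpa using hlim.const_mul (ε ^ 2)⁻¹) (.of_forall fun _ => measureReal_nonneg) ?_
  filter_upwards [hZ] with i hi
  have hset : {ω | ε ≤ dist (Z i ω) 0} = {ω | ε ^ 2 ≤ Z i ω ^ 2} := by
    ext ω
    simp only [Set.mem_ofPred_eq, Real.dist_0_eq_abs, sq_le_sq, abs_of_pos hε]
  rw [hset, le_inv_mul_iff₀ (by positivity)]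
  exact mul_meas_ge_le_integral_of_nonneg (.of_forall fun ω => sq_nonneg (Z i ω)) hi _

lemma tendsto_measure_lt_of_tendstoInMeasure {Z : ι → Ω → ℝ}
    (hZ : TendstoInMeasure P Z l (fun _ => 0)) {ε : ℝ} (hε : 0 < ε) :
    Tendsto (fun i => P {ω | ε < Z i ω}) l (𝓝 0) :=
  tendsto_of_tendsto_of_tendsto_of_le_of_le tendsto_const_nhds
    (tendstoInMeasure_iff_dist.1 hZ ε hε) (fun _ => zero_le) fun i =>
    measure_mono fun ω (hω : ε < Z i ω) => by
      simpa only [Set.mem_ofPred_eq, Real.dist_0_eq_abs] using hω.le.trans (le_abs_self _)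

end ConvergenceInMeasure

lemma measurable_of_measurable_dist {β X : Type*} [MeasurableSpace β] [PseudoMetricSpace X]
    [SecondCountableTopology X] [MeasurableSpace X] [BorelSpace X] {f : β → X}
    (hf : ∀ u, Measurable fun x => dist (f x) u) : Measurable f := by
  refine measurable_of_isOpen fun U hU => ?_
  choose! r hr hrU using Metric.isOpen_iff.1 hU
  obtain ⟨T, -, hT, hball⟩ := TopologicalSpace.isOpen_biUnion_countable U
    (fun u => Metric.ball u (r u)) fun _ _ => Metric.isOpen_ball
  have hU_eq : U = ⋃ u ∈ T, Metric.ball u (r u) := hball ▸ Set.Subset.antisymm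
    (fun u hu => Set.mem_biUnion hu (Metric.mem_ball_self (hr u hu))) (Set.iUnion₂_subset hrU)
  rw [hU_eq, Set.preimage_iUnion₂]
  exact .biUnion hT fun u _ => measurableSet_lt (hf u) measurable_const

section RandomMeasures

variable {ι α Ω : Type*} [MeasurableSpace α] [MeasurableSpace Ω] {P : Measure Ω} {l : Filter ι}

/-- Setwise convergence in probability of the random measures `ν i ω` to the deterministic
measure `ν₀`: the integral of every bounded measurable function converges in measure. The random
measures are not required to depend measurably on `ω`. -/
def TendstoSetwiseInMeasure (P : Measure Ω) (ν : ι → Ω → Measure α) (l : Filter ι)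
    (ν₀ : Measure α) : Prop :=
  ∀ φ : α → ℝ, Measurable φ → (∃ C, ∀ x, |φ x| ≤ C) →
    TendstoInMeasure P (fun i ω => ∫ x, φ x ∂ν i ω) l fun _ => ∫ x, φ x ∂ν₀

namespace TendstoSetwiseInMeasure

variable {E : Type*} [NormedAddCommGroup E] [NormedSpace ℝ E] [CompleteSpace E]
  {ν : ι → Ω → Measure α} {ν₀ : Measure α} [∀ i ω, IsFiniteMeasure (ν i ω)] [IsFiniteMeasure ν₀]

lemma integral_simpleFunc (hν : TendstoSetwiseInMeasure P ν l ν₀) (s : SimpleFunc α E) :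
    TendstoInMeasure P (fun i ω => ∫ x, s x ∂ν i ω) l fun _ => ∫ x, s x ∂ν₀ := by
  have h_int : ∀ (ν : Measure α) [IsFiniteMeasure ν],
      ∫ x, s x ∂ν = ∑ v ∈ s.range, (∫ x, (s ⁻¹' {v}).indicator (1 : α → ℝ) x ∂ν) • v := by
    intro ν _
    simp only [s.integral_eq_sum s.integrable_of_isFiniteMeasure,
      integral_indicator_one (s.measurableSet_fiber _)]
  simp only [h_int]
  refine tendstoInMeasure_sum _ fun v _ => tendstoInMeasure_comp_lipschitzWith
    (ContinuousLinearMap.toSpanSingleton ℝ v).lipschitz (hν _ ?_ ⟨1, fun x => ?_⟩)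
  · exact measurable_one.indicator (s.measurableSet_fiber v)
  · by_cases hx : x ∈ s ⁻¹' {v} <;> simp [hx]

lemma integral_stronglyMeasurable (hν : TendstoSetwiseInMeasure P ν l ν₀)
    {h : α → E} (hm : StronglyMeasurable h) {C : ℝ} (hC : ∀ x, ‖h x‖ ≤ C) :
    TendstoInMeasure P (fun i ω => ∫ x, h x ∂ν i ω) l fun _ => ∫ x, h x ∂ν₀ := by
  have h_int : ∀ (ν : Measure α) [IsFiniteMeasure ν], Integrable h ν := fun ν _ =>
    .of_bound hm.aestronglyMeasurable C (.of_forall hC)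
  refine tendstoInMeasure_of_forall_dist_le_add fun δ hδ => ?_
  -- A simple function `s` close to `h` in `L¹(ν₀)` is also close to `h` in `L¹(ν i ω)` with high
  -- probability, because `‖h - s‖` is itself a bounded scalar integrand.
  obtain ⟨s, hs, -⟩ := (memLp_one_iff_integrable.2 (h_int ν₀)).exists_simpleFunc_eLpNorm_sub_lt
    ENNReal.one_ne_top (ε := ENNReal.ofReal (δ / 2)) (by simpa using hδ)
  let ψ : α → ℝ := fun x => ‖(h - s) x‖
  have hψ_le : ∫ x, ψ x ∂ν₀ ≤ δ / 2 := by
    rw [integral_norm_eq_lintegral_enorm (hm.sub s.stronglyMeasurable).aestronglyMeasurable]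
    rw [eLpNorm_one_eq_lintegral_enorm] at hs
    exact ENNReal.toReal_le_of_le_ofReal (half_pos hδ).le hs.le
  have hψ_bdd : ∃ D, ∀ x, |ψ x| ≤ D := by
    obtain ⟨D, hD⟩ := s.exists_forall_norm_le
    exact ⟨C + D, fun x => (abs_norm _).trans_le <|
      (norm_sub_le _ _).trans (add_le_add (hC x) (hD x))⟩
  have hdist : ∀ (ν : Measure α) [IsFiniteMeasure ν],
      dist (∫ x, h x ∂ν) (∫ x, s x ∂ν) ≤ ∫ x, ψ x ∂ν := fun ν _ => by
    rw [dist_eq_norm, ← integral_sub (h_int ν) s.integrable_of_isFiniteMeasure]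
    exact norm_integral_le_integral_norm _
  have hψ := hν ψ (hm.sub s.stronglyMeasurable).norm.measurable hψ_bdd
  refine ⟨_, tendstoInMeasure_add_zero (tendstoInMeasure_dist hψ)
    (tendstoInMeasure_dist (hν.integral_simpleFunc s)), .of_forall fun i ω => ?_⟩
  have h₁ := dist_triangle4 (∫ x, h x ∂ν i ω) (∫ x, s x ∂ν i ω) (∫ x, s x ∂ν₀) (∫ x, h x ∂ν₀)
  have h₂ := hdist (ν i ω)
  have h₃ := dist_comm (∫ x, s x ∂ν₀) _ ▸ hdist ν₀
  have h₄ := (le_abs_self _).trans_eq (Real.dist_eq (∫ x, ψ x ∂ν i ω) (∫ x, ψ x ∂ν₀)).symm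
  linarith

end TendstoSetwiseInMeasure

/-- The empirical distribution of a finite family of points; it is a probability measure unless
the family is empty, in which case it is `0`. -/
noncomputable def empiricalMeasure {κ : Type*} [Fintype κ] (x : κ → α) : Measure α :=
  (Fintype.card κ : ℝ≥0)⁻¹ • ∑ j, Measure.dirac (x j)

instance {κ : Type*} [Fintype κ] (x : κ → α) : IsFiniteMeasure (empiricalMeasure x) := by
  unfold empiricalMeasure; infer_instance

instance {κ : Type*} [Fintype κ] [Nonempty κ] (x : κ → α) :
    IsProbabilityMeasure (empiricalMeasure x) where
  measure_univ := by
    simp [empiricalMeasure, ENNReal.smul_def, ENNReal.inv_mul_cancel]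

lemma integral_empiricalMeasure {κ E : Type*} [Fintype κ] [NormedAddCommGroup E]
    [NormedSpace ℝ E] [CompleteSpace E] {φ : α → E} (hφ : StronglyMeasurable φ) (x : κ → α) :
    ∫ y, φ y ∂empiricalMeasure x = (Fintype.card κ : ℝ)⁻¹ • ∑ j, φ (x j) := by
  rw [empiricalMeasure, integral_smul_nnreal_measure, integral_finsetSum_measure fun j _ =>
    integrable_dirac' hφ enorm_lt_top]
  simp only [integral_dirac' _ _ hφ, NNReal.smul_def, NNReal.coe_inv, NNReal.coe_natCast]

end RandomMeasures

section CondExp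

variable {Ω : Type*} {F m : MeasurableSpace Ω} {P : Measure Ω}

lemma integral_sq_average_le {κ : Type*} [Fintype κ] {Z : κ → Ω → ℝ} {K : ℝ}
    (hZ : ∀ j, MemLp (Z j) 2 P) (hK : ∀ j, ∫ ω, Z j ω ^ 2 ∂P ≤ K)
    (horth : ∀ i j, i ≠ j → ∫ ω, Z i ω * Z j ω ∂P = 0) :
    ∫ ω, ((Fintype.card κ : ℝ)⁻¹ * ∑ j, Z j ω) ^ 2 ∂P ≤ K / Fintype.card κ := by
  have hint : ∀ i j, Integrable (fun ω => Z i ω * Z j ω) P := fun i j =>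
    (hZ i).integrable_mul (hZ j)
  have hsum : ∫ ω, (∑ j, Z j ω) ^ 2 ∂P = ∑ j, ∫ ω, Z j ω ^ 2 ∂P := by
    simp only [sq, Finset.sum_mul_sum]
    rw [integral_finsetSum _ fun i _ => integrable_finsetSum _ fun j _ => hint i j]
    refine Finset.sum_congr rfl fun i _ => ?_
    rw [integral_finsetSum _ fun j _ => hint i j]
    exact Finset.sum_eq_single i (fun j _ hj => horth i j hj.symm) (by simp)
  simp only [mul_pow, integral_const_mul, hsum]
  calc ((Fintype.card κ : ℝ)⁻¹) ^ 2 * ∑ j, ∫ ω, Z j ω ^ 2 ∂P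
      ≤ ((Fintype.card κ : ℝ)⁻¹) ^ 2 * ∑ _j : κ, K := by gcongr with j; exact hK j
    _ = K / Fintype.card κ := by
      rcases eq_or_ne (Fintype.card κ : ℝ) 0 with h | h
      · simp [h]
      · simp only [Finset.sum_const, Finset.card_univ, nsmul_eq_mul]; field_simp

variable [IsFiniteMeasure P] {U V : Ω → ℝ}

lemma integral_mul_condExp (hF : F ≤ m) (hU : MemLp U 2 P) (hV : MemLp V 2 P) :
    ∫ ω, U ω * (P[V | F]) ω ∂P = ∫ ω, (P[U | F]) ω * (P[V | F]) ω ∂P := by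
  have hUV : Integrable (U * P[V | F]) P := hU.integrable_mul (hV.condExp one_le_two)
  calc ∫ ω, U ω * (P[V | F]) ω ∂P = ∫ ω, (P[U * P[V | F] | F]) ω ∂P := (integral_condExp hF).symm
    _ = ∫ ω, (P[U | F]) ω * (P[V | F]) ω ∂P := integral_congr_ae <|
      condExp_mul_of_stronglyMeasurable_right stronglyMeasurable_condExp hUV
        (hU.integrable one_le_two)

lemma integral_sub_condExp_mul_sub_condExp (hF : F ≤ m) (hU : MemLp U 2 P) (hV : MemLp V 2 P) :
    ∫ ω, (U - P[U | F]) ω * (V - P[V | F]) ω ∂P =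
      ∫ ω, U ω * V ω ∂P - ∫ ω, (P[U | F]) ω * (P[V | F]) ω ∂P := by
  have hU' : MemLp (P[U | F]) 2 P := hU.condExp one_le_two
  have hV' : MemLp (P[V | F]) 2 P := hV.condExp one_le_two
  have hsplit : ∀ ω, (U - P[U | F]) ω * (V - P[V | F]) ω =
      (U * V - U * P[V | F]) ω - (V * P[U | F] - P[U | F] * P[V | F]) ω := fun ω => by
    simp only [Pi.sub_apply, Pi.mul_apply]; ring
  simp only [hsplit]
  rw [integral_sub ((hU.integrable_mul hV).sub (hU.integrable_mul hV'))
    ((hV.integrable_mul hU').sub (hU'.integrable_mul hV')),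
    integral_sub' (hU.integrable_mul hV) (hU.integrable_mul hV'),
    integral_sub' (hV.integrable_mul hU') (hU'.integrable_mul hV')]
  simp only [Pi.mul_apply, integral_mul_condExp hF hU hV, integral_mul_condExp hF hV hU,
    mul_comm ((P[V | F]) _), sub_self, sub_zero]

lemma integral_sub_condExp_sq_le (hF : F ≤ m) (hU : MemLp U 2 P) :
    ∫ ω, (U - P[U | F]) ω ^ 2 ∂P ≤ ∫ ω, U ω ^ 2 ∂P := by
  simp only [sq, integral_sub_condExp_mul_sub_condExp hF hU hU]
  exact sub_le_self _ (integral_nonneg fun ω => mul_self_nonneg _)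

lemma integral_sub_condExp_mul_eq_zero (hF : F ≤ m) (hU : MemLp U 2 P) (hV : MemLp V 2 P)
    (hUV : P[U * V | F] =ᵐ[P] P[U | F] * P[V | F]) :
    ∫ ω, (U - P[U | F]) ω * (V - P[V | F]) ω ∂P = 0 := by
  rw [integral_sub_condExp_mul_sub_condExp hF hU hV, sub_eq_zero,
    ← Pi.mul_def, ← integral_condExp hF (f := U * V)]
  exact integral_congr_ae hUV

end CondExp

section CondIID

variable {κ α Ω : Type*} [Fintype κ] [MeasurableSpace α] {F m : MeasurableSpace Ω} {P : Measure Ω}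
  {ν : Ω → Measure α} {Y : κ → Ω → α}

/-- The family `Y` is, conditionally on the σ-algebra `F`, an i.i.d. sample from the random
distribution `ν`. This is encoded by products of bounded measurable functions of the `Y j`. -/
def IsCondIID (P : Measure Ω) (F : MeasurableSpace Ω) (ν : Ω → Measure α) (Y : κ → Ω → α) :
    Prop :=
  ∀ φ : κ → α → ℝ, (∀ j, Measurable (φ j)) → (∀ j, ∃ C, ∀ x, |φ j x| ≤ C) →
    P[fun ω => ∏ j, φ j (Y j ω) | F] =ᵐ[P] fun ω => ∏ j, ∫ x, φ j x ∂ν ω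

namespace IsCondIID

variable {φ : α → ℝ} {C : ℝ}

lemma condExp_prod [∀ ω, IsProbabilityMeasure (ν ω)] (h : IsCondIID P F ν Y) (hφ : Measurable φ)
    (hC : ∀ x, |φ x| ≤ C) (s : Finset κ) :
    P[fun ω => ∏ j ∈ s, φ (Y j ω) | F] =ᵐ[P] fun ω => (∫ x, φ x ∂ν ω) ^ s.card := by
  classical
  have hs := h (fun j => if j ∈ s then φ else 1) (fun j => by split_ifs <;> fun_prop)
    (fun j => by
      split_ifs
      exacts [⟨C, hC⟩, ⟨1, fun _ => by simp⟩])
  have happly : ∀ j x, (if j ∈ s then φ else 1) x = if j ∈ s then φ x else 1 := fun j x => by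
    split_ifs <;> rfl
  have hint : ∀ j ω, ∫ x, (if j ∈ s then φ x else 1) ∂ν ω = if j ∈ s then ∫ x, φ x ∂ν ω else 1 :=
    fun j ω => by split_ifs <;> simp
  simpa only [happly, hint, Fintype.prod_ite_mem, Finset.prod_const] using hs

lemma condExp_eq [∀ ω, IsProbabilityMeasure (ν ω)] (h : IsCondIID P F ν Y) (hφ : Measurable φ)
    (hC : ∀ x, |φ x| ≤ C) (j : κ) :
    P[fun ω => φ (Y j ω) | F] =ᵐ[P] fun ω => ∫ x, φ x ∂ν ω := by
  simpa using h.condExp_prod hφ hC {j}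

lemma condExp_mul [∀ ω, IsProbabilityMeasure (ν ω)] (h : IsCondIID P F ν Y) (hφ : Measurable φ)
    (hC : ∀ x, |φ x| ≤ C) {i j : κ} (hij : i ≠ j) :
    P[fun ω => φ (Y i ω) * φ (Y j ω) | F] =ᵐ[P]
      P[fun ω => φ (Y i ω) | F] * P[fun ω => φ (Y j ω) | F] := by
  classical
  filter_upwards [h.condExp_prod hφ hC {i, j}, h.condExp_eq hφ hC i, h.condExp_eq hφ hC j]
    with ω hprod hi hj
  simpa only [Finset.prod_pair hij, Finset.card_pair hij, sq, Pi.mul_apply, hi, hj] using hprod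

lemma integral_empiricalMeasure_sub_ae_eq [Nonempty κ] [∀ ω, IsProbabilityMeasure (ν ω)]
    (h : IsCondIID P F ν Y) (hφ : Measurable φ) (hC : ∀ x, |φ x| ≤ C) :
    (fun ω => ∫ x, φ x ∂empiricalMeasure (Y · ω) - ∫ x, φ x ∂ν ω) =ᵐ[P] fun ω =>
      (Fintype.card κ : ℝ)⁻¹ * ∑ j, (φ ∘ Y j - P[φ ∘ Y j | F]) ω := by
  filter_upwards [ae_all_iff.2 (h.condExp_eq hφ hC)] with ω hω
  simp only [integral_empiricalMeasure hφ.stronglyMeasurable, Pi.sub_apply, Function.comp_def, hω,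
    Finset.sum_sub_distrib, Finset.sum_const, Finset.card_univ, nsmul_eq_mul, mul_sub, smul_eq_mul]
  field_simp

lemma integrable_and_integral_sq_le [Nonempty κ] [∀ ω, IsProbabilityMeasure (ν ω)]
    [IsProbabilityMeasure P] (hF : F ≤ m) (hY : ∀ j, Measurable (Y j)) (h : IsCondIID P F ν Y)
    (hφ : Measurable φ) (hC : ∀ x, |φ x| ≤ C) :
    Integrable (fun ω => (∫ x, φ x ∂empiricalMeasure (Y · ω) - ∫ x, φ x ∂ν ω) ^ 2) P ∧
      ∫ ω, (∫ x, φ x ∂empiricalMeasure (Y · ω) - ∫ x, φ x ∂ν ω) ^ 2 ∂P ≤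
        C ^ 2 / Fintype.card κ := by
  have hφY : ∀ j, MemLp (φ ∘ Y j) 2 P := fun j =>
    .of_bound (hφ.comp (hY j)).aestronglyMeasurable C (.of_forall fun ω => hC _)
  have hZ : ∀ j, MemLp (φ ∘ Y j - P[φ ∘ Y j | F]) 2 P := fun j =>
    (hφY j).sub ((hφY j).condExp one_le_two)
  have hsq := (h.integral_empiricalMeasure_sub_ae_eq hφ hC).pow_const 2
  simp only [Pi.pow_def] at hsq
  rw [integrable_congr hsq, integral_congr_ae hsq]
  refine ⟨((memLp_finsetSum _ fun j _ => hZ j).const_mul _).integrable_sq,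
    integral_sq_average_le hZ (fun j => ?_) fun i j hij =>
      integral_sub_condExp_mul_eq_zero hF (hφY i) (hφY j) (h.condExp_mul hφ hC hij)⟩
  calc ∫ ω, (φ ∘ Y j - P[φ ∘ Y j | F]) ω ^ 2 ∂P ≤ ∫ ω, (φ ∘ Y j) ω ^ 2 ∂P :=
        integral_sub_condExp_sq_le hF (hφY j)
    _ ≤ ∫ _, C ^ 2 ∂P := integral_mono (hφY j).integrable_sq (integrable_const _) fun ω =>
        sq_le_sq' (abs_le.1 (hC _)).1 (abs_le.1 (hC _)).2
    _ = C ^ 2 := by simp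

end IsCondIID

end CondIID

section LawOfLargeNumbers

variable {ι α Ω : Type*} {κ : ι → Type*} [∀ i, Fintype (κ i)] [MeasurableSpace α]
  {m : MeasurableSpace Ω} {P : Measure Ω} [IsProbabilityMeasure P] {l : Filter ι}
  {F : ι → MeasurableSpace Ω} {ν : ι → Ω → Measure α} {ν₀ : Measure α} {Y : ∀ i, κ i → Ω → α}

lemma tendstoInMeasure_integral_empiricalMeasure_sub
    (hκ : Tendsto (fun i => Fintype.card (κ i)) l atTop) (hF : ∀ i, F i ≤ m)
    (hY : ∀ i j, Measurable (Y i j)) (hν : ∀ᶠ i in l, ∀ ω, IsProbabilityMeasure (ν i ω))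
    (hiid : ∀ i, IsCondIID P (F i) (ν i) (Y i)) {φ : α → ℝ} (hφ : Measurable φ)
    {C : ℝ} (hC : ∀ x, |φ x| ≤ C) :
    TendstoInMeasure P
      (fun i ω => ∫ x, φ x ∂empiricalMeasure (Y i · ω) - ∫ x, φ x ∂ν i ω) l fun _ => 0 := by
  have hmain : ∀ᶠ i in l,
      Integrable (fun ω => (∫ x, φ x ∂empiricalMeasure (Y i · ω) - ∫ x, φ x ∂ν i ω) ^ 2) P ∧
        ∫ ω, (∫ x, φ x ∂empiricalMeasure (Y i · ω) - ∫ x, φ x ∂ν i ω) ^ 2 ∂P ≤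
          C ^ 2 / Fintype.card (κ i) := by
    filter_upwards [hν, hκ.eventually_gt_atTop 0] with i hi hcard
    have : Nonempty (κ i) := Fintype.card_pos_iff.1 hcard
    exact (hiid i).integrable_and_integral_sq_le (hF i) (hY i) hφ hC
  refine tendstoInMeasure_of_tendsto_integral_sq (hmain.mono fun _ hi => hi.1) ?_
  exact squeeze_zero' (.of_forall fun i => integral_nonneg fun ω => sq_nonneg _)
    (hmain.mono fun _ hi => hi.2) ((tendsto_natCast_atTop_atTop.comp hκ).const_div_atTop _)

lemma TendstoSetwiseInMeasure.empiricalMeasure_of_isCondIID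
    (hν₀ : TendstoSetwiseInMeasure P ν l ν₀)
    (hκ : Tendsto (fun i => Fintype.card (κ i)) l atTop) (hF : ∀ i, F i ≤ m)
    (hY : ∀ i j, Measurable (Y i j)) (hν : ∀ᶠ i in l, ∀ ω, IsProbabilityMeasure (ν i ω))
    (hiid : ∀ i, IsCondIID P (F i) (ν i) (Y i)) :
    TendstoSetwiseInMeasure P (fun i ω => empiricalMeasure (Y i · ω)) l ν₀ := by
  rintro φ hφ ⟨C, hC⟩
  simpa only [sub_add_cancel, zero_add] using tendstoInMeasure_add
    (tendstoInMeasure_integral_empiricalMeasure_sub hκ hF hY hν hiid hφ hC) (hν₀ φ hφ ⟨C, hC⟩)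

end LawOfLargeNumbers

section Densities

variable {α : Type*} [MeasurableSpace α] {μ : Measure α} {f g : α → ℝ}

/-- `f` is a probability density with respect to `μ`. -/
structure IsProbDensity (μ : Measure α) (f : α → ℝ) : Prop where
  measurable : Measurable f
  nonneg : ∀ x, 0 ≤ f x
  integrable : Integrable f μ
  integral_eq_one : ∫ x, f x ∂μ = 1

/-- The measure with density `f` with respect to `μ`; negative values of `f` count as `0`. -/
noncomputable def densityMeasure (μ : Measure α) (f : α → ℝ) : Measure α :=
  μ.withDensity fun x => ENNReal.ofReal (f x)

lemma IsProbDensity.isProbabilityMeasure (hf : IsProbDensity μ f) :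
    IsProbabilityMeasure (densityMeasure μ f) where
  measure_univ := by
    rw [densityMeasure, withDensity_apply _ .univ, Measure.restrict_univ,
      ← ofReal_integral_eq_lintegral_ofReal hf.integrable (.of_forall hf.nonneg),
      hf.integral_eq_one, ENNReal.ofReal_one]

lemma IsProbDensity.integral_densityMeasure (hf : IsProbDensity μ f) (φ : α → ℝ) :
    ∫ x, φ x ∂densityMeasure μ f = ∫ x, f x * φ x ∂μ := by
  rw [densityMeasure, integral_withDensity_eq_integral_toReal_smul
    hf.measurable.ennreal_ofReal (.of_forall fun _ => ENNReal.ofReal_lt_top)]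
  simp only [ENNReal.toReal_ofReal (hf.nonneg _), smul_eq_mul]

lemma abs_integral_mul_sub_le (hf : Integrable f μ) (hg : Integrable g μ) {φ : α → ℝ}
    (hφ : Measurable φ) {C : ℝ} (hC : ∀ x, |φ x| ≤ C) :
    |∫ x, f x * φ x ∂μ - ∫ x, g x * φ x ∂μ| ≤ C * ∫ x, |f x - g x| ∂μ := by
  rw [← integral_sub (hf.mul_bdd hφ.aestronglyMeasurable (.of_forall hC))
    (hg.mul_bdd hφ.aestronglyMeasurable (.of_forall hC)), ← integral_const_mul]
  rw [← Real.norm_eq_abs]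
  refine norm_integral_le_of_norm_le ((hf.sub hg).abs.const_mul C) (.of_forall fun x => ?_)
  rw [← sub_mul, norm_mul, mul_comm]
  exact mul_le_mul_of_nonneg_right (hC x) (abs_nonneg _)

lemma tendstoSetwiseInMeasure_densityMeasure {ι Ω : Type*} [MeasurableSpace Ω] {P : Measure Ω}
    {l : Filter ι} {f : ι → Ω → α → ℝ} (hf : ∀ᶠ i in l, ∀ ω, IsProbDensity μ (f i ω))
    (hg : IsProbDensity μ g)
    (hfg : TendstoInMeasure P (fun i ω => ∫ x, |f i ω x - g x| ∂μ) l fun _ => 0) :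
    TendstoSetwiseInMeasure P (fun i ω => densityMeasure μ (f i ω)) l (densityMeasure μ g) := by
  rintro φ hφ ⟨C, hC⟩
  refine tendstoInMeasure_of_dist_le (tendstoInMeasure_const_mul hfg C) (hf.mono fun i hi ω => ?_)
  rw [(hi ω).integral_densityMeasure, hg.integral_densityMeasure, Real.dist_eq]
  exact abs_integral_mul_sub_le (hi ω).integrable hg.integrable hφ hC

end Densities

section Mixtures

variable {α β : Type*} [MeasurableSpace α] [MeasurableSpace β] {μ : Measure α} {ν ν' : Measure β}
  {a : β → α → ℝ}

/-- The density `y ↦ ∫ a x y dν(x)` of the mixture, with mixing distribution `ν`, of the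
densities `a x`. With `ν` the distribution of the hidden state it is the one-step prediction. -/
noncomputable def mixtureDensity (ν : Measure β) (a : β → α → ℝ) (y : α) : ℝ := ∫ x, a x y ∂ν

lemma integral_toL1_eq_toL1_mixtureDensity [SFinite μ] [SFinite ν] (ha : ∀ x, Integrable (a x) μ)
    (ha_prod : Integrable (Function.uncurry a) (ν.prod μ))
    (ha_L1 : Integrable (fun x => (ha x).toL1 (a x)) ν) (hmix : Integrable (mixtureDensity ν a) μ) :
    ∫ x, (ha x).toL1 (a x) ∂ν = hmix.toL1 (mixtureDensity ν a) := by
  set I : Lp ℝ 1 μ := ∫ x, (ha x).toL1 (a x) ∂ν with hI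
  have hI_ae : I =ᵐ[μ] mixtureDensity ν a := by
    refine (L1.integrable_coeFn I).ae_eq_of_forall_setIntegral_eq _ _ hmix fun s _ _ => ?_
    let L : Lp ℝ 1 μ →L[ℝ] ℝ :=
      (L1.integralCLM (E := ℝ) (μ := μ.restrict s)).comp (LpToLpRestrictCLM α ℝ ℝ μ 1 s)
    have hL : ∀ u : Lp ℝ 1 μ, L u = ∫ y in s, u y ∂μ := fun u => by
      change L1.integralCLM (LpToLpRestrictCLM α ℝ ℝ μ 1 s u) = _
      rw [← L1.integral_eq, L1.integral_eq_integral]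
      exact integral_congr_ae (LpToLpRestrictCLM_coeFn ℝ s u)
    have hL_toL1 : ∀ x, L ((ha x).toL1 (a x)) = ∫ y in s, a x y ∂μ := fun x =>
      (hL _).trans (integral_congr_ae (ae_restrict_of_ae (ha x).coeFn_toL1))
    calc ∫ y in s, I y ∂μ = ∫ x, L ((ha x).toL1 (a x)) ∂ν := by
          rw [← hL, hI, L.integral_comp_comm ha_L1]
      _ = ∫ x, ∫ y in s, a x y ∂μ ∂ν := by simp only [hL_toL1]
      _ = ∫ y in s, mixtureDensity ν a y ∂μ := integral_integral_swap <|
          ha_prod.mono_measure (Measure.prod_mono le_rfl Measure.restrict_le_self)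
  exact Lp.ext (hI_ae.trans hmix.coeFn_toL1.symm)

/-- `a x` is, for every `x : β`, the density with respect to `μ` of the law of a transition
from `x`; that is, `a` is the density of a Markov kernel. -/
structure IsTransitionDensity (μ : Measure α) (a : β → α → ℝ) : Prop where
  measurable : Measurable (Function.uncurry a)
  nonneg : ∀ x y, 0 ≤ a x y
  integral_eq_one : ∀ x, ∫ y, a x y ∂μ = 1

namespace IsTransitionDensity

lemma isProbDensity (ha : IsTransitionDensity μ a) (x : β) : IsProbDensity μ (a x) where
  measurable := ha.measurable.of_uncurry_left
  nonneg := ha.nonneg x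
  integrable := .of_integral_ne_zero (by simp [ha.integral_eq_one])
  integral_eq_one := ha.integral_eq_one x

lemma integrable_uncurry [SFinite μ] [IsFiniteMeasure ν] (ha : IsTransitionDensity μ a) :
    Integrable (Function.uncurry a) (ν.prod μ) := by
  rw [integrable_prod_iff ha.measurable.aestronglyMeasurable]
  refine ⟨.of_forall fun x => (ha.isProbDensity x).integrable, ?_⟩
  simp only [Function.uncurry, Real.norm_of_nonneg (ha.nonneg _ _), ha.integral_eq_one,
    integrable_const]

lemma integrable_mixtureDensity [SFinite μ] [IsFiniteMeasure ν] (ha : IsTransitionDensity μ a) :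
    Integrable (mixtureDensity ν a) μ :=
  ha.integrable_uncurry.integral_prod_right

lemma isProbDensity_mixtureDensity [SFinite μ] [IsProbabilityMeasure ν]
    (ha : IsTransitionDensity μ a) : IsProbDensity μ (mixtureDensity ν a) where
  measurable := ha.measurable.stronglyMeasurable.integral_prod_left.measurable
  nonneg y := integral_nonneg fun x => ha.nonneg x y
  integrable := ha.integrable_mixtureDensity
  integral_eq_one := by
    simp only [mixtureDensity]
    rw [← integral_integral_swap ha.integrable_uncurry]
    simp [ha.integral_eq_one]

lemma mixtureDensity_empiricalMeasure {κ : Type*} [Fintype κ] (ha : IsTransitionDensity μ a)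
    (x : κ → β) :
    mixtureDensity (empiricalMeasure x) a = fun y => (Fintype.card κ : ℝ)⁻¹ * ∑ j, a (x j) y :=
  funext fun _ => integral_empiricalMeasure ha.measurable.of_uncurry_right.stronglyMeasurable x

/-- The transition density as a map into `L¹(μ)`, to which Banach-valued integration applies. -/
noncomputable def toL1 (ha : IsTransitionDensity μ a) (x : β) : Lp ℝ 1 μ :=
  (ha.isProbDensity x).integrable.toL1 (a x)

lemma norm_toL1 (ha : IsTransitionDensity μ a) (x : β) : ‖ha.toL1 x‖ = 1 := by
  rw [toL1, L1.norm_of_fun_eq_integral_norm]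
  simp only [Real.norm_of_nonneg (ha.nonneg _ _), ha.integral_eq_one]

lemma stronglyMeasurable_toL1 [SFinite μ] [MeasureTheory.IsSeparable μ]
    (ha : IsTransitionDensity μ a) : StronglyMeasurable ha.toL1 := by
  have : Fact ((1 : ℝ≥0∞) ≠ ∞) := ⟨ENNReal.one_ne_top⟩
  borelize (↥(Lp ℝ 1 μ))
  refine (measurable_of_measurable_dist fun u => ?_).stronglyMeasurable
  have hdist : ∀ x, dist (ha.toL1 x) u = ∫ y, |a x y - u y| ∂μ := fun x => by
    rw [L1.dist_eq_integral_dist]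
    refine integral_congr_ae ?_
    filter_upwards [(ha.isProbDensity x).integrable.coeFn_toL1] with y hy
    rw [toL1, hy, Real.dist_eq]
  have hmeas : Measurable (Function.uncurry fun x y => |a x y - u y|) :=
    (ha.measurable.sub ((Lp.stronglyMeasurable u).measurable.comp measurable_snd)).abs
  simp only [hdist]
  exact hmeas.stronglyMeasurable.integral_prod_right.measurable

lemma integrable_toL1 [SFinite μ] [MeasureTheory.IsSeparable μ] [IsFiniteMeasure ν]
    (ha : IsTransitionDensity μ a) : Integrable ha.toL1 ν :=
  .of_bound ha.stronglyMeasurable_toL1.aestronglyMeasurable 1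
    (.of_forall fun x => (ha.norm_toL1 x).le)

lemma dist_integral_toL1 [SFinite μ] [MeasureTheory.IsSeparable μ] [IsFiniteMeasure ν]
    [IsFiniteMeasure ν'] (ha : IsTransitionDensity μ a) :
    dist (∫ x, ha.toL1 x ∂ν) (∫ x, ha.toL1 x ∂ν') =
      ∫ y, |mixtureDensity ν a y - mixtureDensity ν' a y| ∂μ := by
  have h_int : ∀ (ν : Measure β) [IsFiniteMeasure ν], ∫ x, ha.toL1 x ∂ν =
      ha.integrable_mixtureDensity.toL1 (mixtureDensity ν a) := fun ν _ =>
    integral_toL1_eq_toL1_mixtureDensity (fun x => (ha.isProbDensity x).integrable)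
      ha.integrable_uncurry ha.integrable_toL1 _
  rw [h_int ν, h_int ν', dist_eq_norm, ← Integrable.toL1_sub, L1.norm_of_fun_eq_integral_norm]
  rfl

lemma tendstoInMeasure_mixtureDensity [SFinite μ] [MeasureTheory.IsSeparable μ] {ι Ω : Type*}
    [MeasurableSpace Ω] {P : Measure Ω} {l : Filter ι} {ν : ι → Ω → Measure β} {ν₀ : Measure β}
    [∀ i ω, IsFiniteMeasure (ν i ω)] [IsFiniteMeasure ν₀] (ha : IsTransitionDensity μ a)
    (hν : TendstoSetwiseInMeasure P ν l ν₀) :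
    TendstoInMeasure P
      (fun i ω => ∫ y, |mixtureDensity (ν i ω) a y - mixtureDensity ν₀ a y| ∂μ) l fun _ => 0 := by
  simpa only [ha.dist_integral_toL1] using tendstoInMeasure_dist
    (hν.integral_stronglyMeasurable ha.stronglyMeasurable_toL1 fun x => (ha.norm_toL1 x).le)

end IsTransitionDensity

end Mixtures

section Bayes

variable {α : Type*} [MeasurableSpace α] {μ : Measure α} {f g b : α → ℝ} {C : ℝ}

/-- `b` is a positive likelihood function bounded by `C`. -/
structure IsLikelihood (b : α → ℝ) (C : ℝ) : Prop where
  measurable : Measurable b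
  pos : ∀ x, 0 < b x
  le : ∀ x, b x ≤ C

namespace IsLikelihood

lemma abs_le (hb : IsLikelihood b C) (x : α) : |b x| ≤ C :=
  (abs_of_pos (hb.pos x)).trans_le (hb.le x)

lemma integrable_mul (hb : IsLikelihood b C) (hf : Integrable f μ) :
    Integrable (fun x => f x * b x) μ :=
  hf.mul_bdd hb.measurable.aestronglyMeasurable (.of_forall hb.abs_le)

lemma integral_mul_pos (hb : IsLikelihood b C) (hf : IsProbDensity μ f) :
    0 < ∫ x, f x * b x ∂μ := by
  have hsupp : Function.support (fun x => f x * b x) = Function.support f := by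
    ext x
    simp [(hb.pos x).ne']
  rw [integral_pos_iff_support_of_nonneg (fun x => mul_nonneg (hf.nonneg x) (hb.pos x).le)
    (hb.integrable_mul hf.integrable), hsupp,
    ← integral_pos_iff_support_of_nonneg hf.nonneg hf.integrable, hf.integral_eq_one]
  exact one_pos

lemma isProbDensity_bayesOp (hb : IsLikelihood b C) (hf : IsProbDensity μ f) :
    IsProbDensity μ (bayesOp μ f b) where
  measurable := (hf.measurable.mul hb.measurable).div_const _
  nonneg x := div_nonneg (mul_nonneg (hf.nonneg x) (hb.pos x).le) (hb.integral_mul_pos hf).le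
  integrable := (hb.integrable_mul hf.integrable).div_const _
  integral_eq_one := (integral_div _ _).trans (div_self (hb.integral_mul_pos hf).ne')

lemma abs_bayesOp_sub_le (hb : IsLikelihood b C) (hf : IsProbDensity μ f)
    (hg : IsProbDensity μ g) (x : α) :
    |bayesOp μ f b x - bayesOp μ g b x| ≤
      |∫ x, f x * b x ∂μ - ∫ x, g x * b x ∂μ| / (∫ x, g x * b x ∂μ) * bayesOp μ f b x +
        C / (∫ x, g x * b x ∂μ) * |f x - g x| := by
  have hcf := hb.integral_mul_pos hf
  have hcg := hb.integral_mul_pos hg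
  have hsplit : bayesOp μ f b x - bayesOp μ g b x =
      (∫ x, g x * b x ∂μ - ∫ x, f x * b x ∂μ) / (∫ x, g x * b x ∂μ) * bayesOp μ f b x +
        b x / (∫ x, g x * b x ∂μ) * (f x - g x) := by
    simp only [bayesOp]
    field_simp
    ring
  rw [hsplit]
  refine (abs_add_le _ _).trans ?_
  rw [abs_mul, abs_mul, abs_div, abs_div, abs_of_pos hcg,
    abs_of_nonneg ((hb.isProbDensity_bayesOp hf).nonneg x), abs_sub_comm]
  gcongr
  exact hb.abs_le x

lemma integral_abs_bayesOp_sub_le (hb : IsLikelihood b C) (hf : IsProbDensity μ f)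
    (hg : IsProbDensity μ g) :
    ∫ x, |bayesOp μ f b x - bayesOp μ g b x| ∂μ ≤
      2 * C / (∫ x, g x * b x ∂μ) * ∫ x, |f x - g x| ∂μ := by
  have hcg := hb.integral_mul_pos hg
  have hpt := hb.abs_bayesOp_sub_le hf hg
  set cf := ∫ x, f x * b x ∂μ
  set cg := ∫ x, g x * b x ∂μ
  have hBf := hb.isProbDensity_bayesOp hf
  have hi₁ : Integrable (fun x => |cf - cg| / cg * bayesOp μ f b x) μ := hBf.integrable.const_mul _
  have hi₂ : Integrable (fun x => C / cg * |f x - g x|) μ :=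
    (hf.integrable.sub hg.integrable).abs.const_mul _
  calc ∫ x, |bayesOp μ f b x - bayesOp μ g b x| ∂μ
      ≤ ∫ x, (|cf - cg| / cg * bayesOp μ f b x + C / cg * |f x - g x|) ∂μ :=
        integral_mono (hBf.integrable.sub (hb.isProbDensity_bayesOp hg).integrable).abs
          (hi₁.add hi₂) hpt
    _ = |cf - cg| / cg + C / cg * ∫ x, |f x - g x| ∂μ := by
        rw [integral_add hi₁ hi₂, integral_const_mul, integral_const_mul, hBf.integral_eq_one,
          mul_one]
    _ ≤ C * (∫ x, |f x - g x| ∂μ) / cg + C / cg * ∫ x, |f x - g x| ∂μ := by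
        gcongr
        exact abs_integral_mul_sub_le hf.integrable hg.integrable hb.measurable hb.abs_le
    _ = 2 * C / cg * ∫ x, |f x - g x| ∂μ := by ring

lemma tendstoInMeasure_bayesOp {ι Ω : Type*} [MeasurableSpace Ω] {P : Measure Ω} {l : Filter ι}
    {f : ι → Ω → α → ℝ} (hb : IsLikelihood b C) (hf : ∀ᶠ i in l, ∀ ω, IsProbDensity μ (f i ω))
    (hg : IsProbDensity μ g)
    (hfg : TendstoInMeasure P (fun i ω => ∫ x, |f i ω x - g x| ∂μ) l fun _ => 0) :
    TendstoInMeasure P (fun i ω => ∫ x, |bayesOp μ (f i ω) b x - bayesOp μ g b x| ∂μ) l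
      fun _ => 0 := by
  refine tendstoInMeasure_of_dist_le
    (tendstoInMeasure_const_mul hfg (2 * C / ∫ x, g x * b x ∂μ)) (hf.mono fun i hi ω => ?_)
  rw [Real.dist_0_eq_abs, abs_of_nonneg (integral_nonneg fun _ => abs_nonneg _)]
  exact hb.integral_abs_bayesOp_sub_le (hi ω) hg

end IsLikelihood

end Bayes

section Filtering

variable {α Ω : Type*} [MeasurableSpace α] {μ : Measure α} {a0 : α → ℝ} {a : ℕ → α → α → ℝ}
  {b : ℕ → α → ℝ} {N : ℕ}

/-- The data of a state space model with the observations fixed: `a0` is the initial density,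
`a t` the transition density and `b t` the likelihood function of the observation at time `t`. -/
structure IsStateSpaceModel (μ : Measure α) (a0 : α → ℝ) (a : ℕ → α → α → ℝ) (b : ℕ → α → ℝ) :
    Prop where
  initial : IsProbDensity μ a0
  transition : ∀ t, IsTransitionDensity μ (a t)
  likelihood : ∀ t, ∃ C, IsLikelihood (b t) C

lemma IsProbDensity.markovOp_eq_mixtureDensity {f : α → ℝ} (hf : IsProbDensity μ f)
    (a : α → α → ℝ) : markovOp μ a f = mixtureDensity (densityMeasure μ f) a :=
  funext fun _ => (hf.integral_densityMeasure _).symm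

lemma pastFiltration_le [MeasurableSpace Ω] {X : ℕ → Fin N → Ω → α}
    (hX : ∀ t j, Measurable (X t j)) (t : ℕ) : pastFiltration X t ≤ ‹MeasurableSpace Ω› :=
  iSup_le fun s => (measurable_pi_iff.2 fun j => hX s j).comap_le

namespace IsStateSpaceModel

lemma isProbDensity_trueFilter [SFinite μ] (h : IsStateSpaceModel μ a0 a b) :
    ∀ t, IsProbDensity μ (trueFilter μ a0 a b t)
  | 0 => h.initial
  | t + 1 => by
    have ht := h.isProbDensity_trueFilter t
    have := ht.isProbabilityMeasure
    obtain ⟨C, hC⟩ := h.likelihood (t + 1)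
    rw [trueFilter, ht.markovOp_eq_mixtureDensity]
    exact hC.isProbDensity_bayesOp (h.transition _).isProbDensity_mixtureDensity

lemma particleFilter_succ (h : IsStateSpaceModel μ a0 a b) (X : ℕ → Fin N → Ω → α) (t : ℕ)
    (ω : Ω) :
    particleFilter μ a0 a b X (t + 1) ω =
      bayesOp μ (mixtureDensity (empiricalMeasure (X t · ω)) (a (t + 1))) (b (t + 1)) := by
  rw [particleFilter, (h.transition _).mixtureDensity_empiricalMeasure, Fintype.card_fin]

lemma isProbDensity_particleFilter [SFinite μ] [NeZero N] (h : IsStateSpaceModel μ a0 a b)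
    (X : ℕ → Fin N → Ω → α) (ω : Ω) :
    ∀ t, IsProbDensity μ (particleFilter μ a0 a b X t ω)
  | 0 => h.initial
  | t + 1 => by
    obtain ⟨C, hC⟩ := h.likelihood (t + 1)
    rw [h.particleFilter_succ]
    exact hC.isProbDensity_bayesOp (h.transition _).isProbDensity_mixtureDensity

lemma isCondIID_particleFilter [SFinite μ] {mΩ : MeasurableSpace Ω} {P : Measure Ω}
    (h : IsStateSpaceModel μ a0 a b) {X : ℕ → Fin N → Ω → α} {t : ℕ}
    (hX : ∀ φ : Fin N → α → ℝ, (∀ j, Measurable (φ j)) → (∀ j, ∃ C, ∀ x, |φ j x| ≤ C) →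
      P[(fun ω => ∏ j, φ j (X t j ω)) | pastFiltration X t]
        =ᵐ[P] fun ω => ∏ j, ∫ x, φ j x * particleFilter μ a0 a b X t ω x ∂μ) :
    IsCondIID P (pastFiltration X t)
      (fun ω => densityMeasure μ (particleFilter μ a0 a b X t ω)) (X t) := by
  intro φ hφ hC
  refine (hX φ hφ hC).trans (.of_forall fun ω => Finset.prod_congr rfl fun j _ => ?_)
  have : NeZero N := ⟨j.pos.ne'⟩
  simp only [(h.isProbDensity_particleFilter X ω t).integral_densityMeasure, mul_comm]

lemma tendstoInMeasure_particleFilter_succ [SFinite μ] [MeasureTheory.IsSeparable μ]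
    [MeasurableSpace Ω] {P : Measure Ω} (h : IsStateSpaceModel μ a0 a b)
    {X : ∀ N : ℕ, ℕ → Fin N → Ω → α} {t : ℕ}
    (hX : TendstoSetwiseInMeasure P (fun N ω => empiricalMeasure (X N t · ω)) atTop
      (densityMeasure μ (trueFilter μ a0 a b t))) :
    TendstoInMeasure P (fun N ω => ∫ x, |particleFilter μ a0 a b (X N) (t + 1) ω x -
      trueFilter μ a0 a b (t + 1) x| ∂μ) atTop fun _ => 0 := by
  have ht := h.isProbDensity_trueFilter t
  have := ht.isProbabilityMeasure
  obtain ⟨C, hC⟩ := h.likelihood (t + 1)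
  simp only [h.particleFilter_succ, trueFilter, ht.markovOp_eq_mixtureDensity]
  refine hC.tendstoInMeasure_bayesOp ?_ (h.transition _).isProbDensity_mixtureDensity
    ((h.transition _).tendstoInMeasure_mixtureDensity hX)
  filter_upwards [eventually_ne_atTop 0] with N hN ω
  have : NeZero N := ⟨hN⟩
  exact (h.transition _).isProbDensity_mixtureDensity

end IsStateSpaceModel

end Filtering

theorem particle_filter_L1_consistency_general {α Ω : Type*} [MeasurableSpace α] {μ : Measure α}
    [SFinite μ] [MeasureTheory.IsSeparable μ] [MeasurableSpace Ω] {P : Measure Ω}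
    [IsProbabilityMeasure P] {a0 : α → ℝ} {a : ℕ → α → α → ℝ} {b : ℕ → α → ℝ}
    (h : IsStateSpaceModel μ a0 a b) {X : ∀ N : ℕ, ℕ → Fin N → Ω → α}
    (hX : ∀ N t j, Measurable (X N t j))
    (hiid : ∀ N t, IsCondIID P (pastFiltration (X N) t)
      (fun ω => densityMeasure μ (particleFilter μ a0 a b (X N) t ω)) (X N t)) (t : ℕ) :
    TendstoInMeasure P (fun N ω => ∫ x, |particleFilter μ a0 a b (X N) t ω x -
      trueFilter μ a0 a b t x| ∂μ) atTop fun _ => 0 := by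
  induction t with
  | zero =>
    simp only [particleFilter, trueFilter, sub_self, abs_zero, integral_zero]
    exact fun ε hε => by simp [hε.ne']
  | succ t ih =>
    have hdens : ∀ᶠ N in atTop, ∀ ω, IsProbDensity μ (particleFilter μ a0 a b (X N) t ω) := by
      filter_upwards [eventually_ne_atTop 0] with N hN ω
      have : NeZero N := ⟨hN⟩
      exact h.isProbDensity_particleFilter (X N) ω t
    have hfilter := tendstoSetwiseInMeasure_densityMeasure hdens (h.isProbDensity_trueFilter t) ih
    have hsample := hfilter.empiricalMeasure_of_isCondIID
      (tendsto_id.congr fun N => (Fintype.card_fin N).symm) (fun N => pastFiltration_le (hX N) t)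
      (fun N => hX N t) (hdens.mono fun N hN ω => (hN ω).isProbabilityMeasure) fun N => hiid N t
    exact h.tendstoInMeasure_particleFilter_succ hsample

/-- Theorem 1: if `x ↦ a_t(x,·)` is continuous for the L¹-norm and
`0 < b_t(x, y_t) ≤ C(t, y_t) < ∞`, then for every `t` the particle filter is
consistent: `‖f^N_{t|t} − f_{t|t}‖₁ → 0` in probability as `N → ∞`.
The particles are described by random variables `X N t j` (sample size `N`, time `t`,
particle index `j`) such that, conditionally on the past, `(X N t j)_{j≤N}` is an
i.i.d. sample from `f^N_{t|t}`. -/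
theorem particle_filter_L1_consistency
    {α : Type*} [MeasurableSpace α] [MetricSpace α] [CompleteSpace α]
    [SecondCountableTopology α] [BorelSpace α]
    (μ : Measure α) [SigmaFinite μ]
    {Ω : Type*} [MeasurableSpace Ω] (P : Measure Ω) [IsProbabilityMeasure P]
    (a0 : α → ℝ) (a : ℕ → α → α → ℝ) (b : ℕ → α → ℝ)
    (ha0_meas : Measurable a0) (ha0_nonneg : ∀ x, 0 ≤ a0 x)
    (ha0_int : Integrable a0 μ) (ha0_one : (∫ x, a0 x ∂μ) = 1)
    (ha_meas : ∀ t, Measurable (Function.uncurry (a t)))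
    (ha_nonneg : ∀ t x' x, 0 ≤ a t x' x)
    (ha_kernel : ∀ t x', ∫ x, a t x' x ∂μ = 1)
    -- L¹-continuity of x ↦ a_t(x,·)
    (ha_cont : ∀ t, ∀ x₀ : α, ∀ δ > (0:ℝ), ∃ η > (0:ℝ), ∀ x, dist x x₀ < η →
      (∫ y, |a t x y - a t x₀ y| ∂μ) < δ)
    -- 0 < b_t ≤ C(t, y_t) < ∞
    (hb_meas : ∀ t, Measurable (b t))
    (hb_pos : ∀ t x, 0 < b t x)
    (hb_bdd : ∀ t, ∃ C, ∀ x, b t x ≤ C)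
    -- the particle system
    (X : (N : ℕ) → ℕ → Fin N → Ω → α)
    (hX_meas : ∀ N t j, Measurable (X N t j))
    -- conditionally on the past, (X N t j)_j is an i.i.d. sample from f^N_{t|t}
    (hcond : ∀ (N t : ℕ) (φ : Fin N → α → ℝ), (∀ j, Measurable (φ j)) →
      (∀ j, ∃ C, ∀ x, |φ j x| ≤ C) →
      P[(fun ω => ∏ j, φ j (X N t j ω)) | pastFiltration (X N) t]
        =ᵐ[P] fun ω => ∏ j, ∫ x, φ j x * particleFilter μ a0 a b (X N) t ω x ∂μ) :
    ∀ t : ℕ, ∀ ε : ℝ, 0 < ε →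
      Filter.Tendsto
        (fun N : ℕ => P {ω | ε < ∫ x,
          |particleFilter μ a0 a b (X N) t ω x - trueFilter μ a0 a b t x| ∂μ})
        Filter.atTop (nhds 0) := by
  have model : IsStateSpaceModel μ a0 a b :=
    { initial := ⟨ha0_meas, ha0_nonneg, ha0_int, ha0_one⟩
      transition := fun t => ⟨ha_meas t, ha_nonneg t, ha_kernel t⟩
      likelihood := fun t => (hb_bdd t).imp fun C hC => ⟨hb_meas t, hb_pos t, hC⟩ }
  exact fun t ε hε => tendsto_measure_lt_of_tendstoInMeasure
    (particle_filter_L1_consistency_general model hX_meas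
      (fun N t => model.isCondIID_particleFilter (hcond N t)) t) hε
end
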